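/- arXiv:1507.03627 — 7 statements merged into one kernel-verified Lean document; each statement's English description precedes it below -/
import Mathlib

section
/- Let a ∈ (0,1] and let θ ∈ C¹((0,∞)) with r ↦ r θ'(r) bounded on (0,∞) and θ' not identically zero. Then there exists R₀ > 0 such that for all R ≥ R₀ one has λ(R,θ') > 0, where λ(R,θ') is the infimum, over all ψ ∈ C¹_c(U) whose restriction to U_R := (0,R) × (0,2πa) is not identically zero, of the quotient (∫_{U_R} [ |∂_rψ − θ'(r)∂_φψ|² + |∂_φψ|²/r² − (1/(4a²)) |ψ|²/r² ] r dr dφ) / (∫_{U_R} |ψ|² r dr dφ). -/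
open MeasureTheory Real Set

noncomputable section

/-- The half-strip `U = (0,∞) × (0,2πa)` of curvilinear coordinates `(r,φ)`. -/
def wedgeU (a : ℝ) : Set (ℝ × ℝ) := Ioi (0:ℝ) ×ˢ Ioo (0:ℝ) (2 * π * a)

/-- The truncated half-strip `U_R = (0,R) × (0,2πa)`. -/
def wedgeUR (a R : ℝ) : Set (ℝ × ℝ) := Ioo (0:ℝ) R ×ˢ Ioo (0:ℝ) (2 * π * a)

/-- The lowest "Neumann" eigenvalue `λ(R,θ')`: the infimum over test functions
`ψ ∈ C¹_c(U)`, not identically zero on `U_R`, of the Hardy-type Rayleigh quotient on `U_R`. -/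
def lamRayleigh (a R : ℝ) (θ' : ℝ → ℝ) : ℝ :=
  sInf { q : ℝ | ∃ ψ : ℝ × ℝ → ℝ,
    ContDiff ℝ 1 ψ ∧ HasCompactSupport ψ ∧ tsupport ψ ⊆ wedgeU a ∧
    (¬ ∀ p ∈ wedgeUR a R, ψ p = 0) ∧
    q = (∫ p in wedgeUR a R,
          ((fderiv ℝ ψ p (1, 0) - θ' p.1 * fderiv ℝ ψ p (0, 1)) ^ 2
            + (fderiv ℝ ψ p (0, 1)) ^ 2 / p.1 ^ 2
            - (1 / (4 * a ^ 2)) * (ψ p) ^ 2 / p.1 ^ 2) * p.1)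
        / (∫ p in wedgeUR a R, (ψ p) ^ 2 * p.1) }


lemma aux_cont {a : ℝ} {ψ F : ℝ × ℝ → ℝ} (hs : tsupport ψ ⊆ wedgeU a)
    (hF : ContinuousOn F (wedgeU a)) (h0 : ∀ p ∉ tsupport ψ, F p = 0) : Continuous F := by
  have hU : IsOpen (wedgeU a) := isOpen_Ioi.prod isOpen_Ioo
  rw [continuous_iff_continuousAt]
  intro p
  by_cases hp : p ∈ tsupport ψ
  · exact hF.continuousAt (hU.mem_nhds (hs hp))
  · have : F =ᶠ[nhds p] fun _ => 0 := by
      filter_upwards [(isClosed_tsupport ψ).isOpen_compl.mem_nhds hp] with q hq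
      exact h0 q hq
    exact continuousAt_const.congr this.symm

lemma aux_int {a : ℝ} {ψ F : ℝ × ℝ → ℝ} (hc : HasCompactSupport ψ) (hs : tsupport ψ ⊆ wedgeU a)
    (hF : ContinuousOn F (wedgeU a)) (h0 : ∀ p ∉ tsupport ψ, F p = 0) : Integrable F :=
  (aux_cont hs hF h0).integrable_of_hasCompactSupport (HasCompactSupport.intro hc h0)

lemma aux_zero {ψ : ℝ × ℝ → ℝ} {p : ℝ × ℝ} (hp : p ∉ tsupport ψ) : ψ p = 0 :=
  image_eq_zero_of_notMem_tsupport hp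

lemma aux_fzero {ψ : ℝ × ℝ → ℝ} {p : ℝ × ℝ} (hp : p ∉ tsupport ψ) : fderiv ℝ ψ p = 0 := by
  have := support_fderiv_subset ℝ (f := ψ)
  by_contra h
  exact hp (this h)

def phiDiv (ψ : ℝ × ℝ → ℝ) (m τ τ' : ℝ → ℝ) (p : ℝ × ℝ) : ℝ :=
  m p.1 * (τ' p.2 * ψ p ^ 2 + τ p.2 * (2 * ψ p * fderiv ℝ ψ p (0, 1)))

def rDiv (ψ : ℝ × ℝ → ℝ) (g g' τ : ℝ → ℝ) (p : ℝ × ℝ) : ℝ :=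
  τ p.2 * (g' p.1 * ψ p ^ 2 + g p.1 * (2 * ψ p * fderiv ℝ ψ p (1, 0)))

section
variable {a R : ℝ} {ψ : ℝ × ℝ → ℝ}

lemma cont_fst {m : ℝ → ℝ} (hm : ContinuousOn m (Ioi 0)) :
    ContinuousOn (fun p : ℝ × ℝ => m p.1) (wedgeU a) :=
  hm.comp continuous_fst.continuousOn (fun _ hp => hp.1)

lemma cont_snd {m : ℝ → ℝ} (hm : ContinuousOn m (Ioo 0 (2 * π * a))) :
    ContinuousOn (fun p : ℝ × ℝ => m p.2) (wedgeU a) :=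
  hm.comp continuous_snd.continuousOn (fun _ hp => hp.2)

lemma cont_fd (h1 : ContDiff ℝ 1 ψ) (v : ℝ × ℝ) : Continuous (fun p => fderiv ℝ ψ p v) :=
  (h1.continuous_fderiv (by norm_num)).clm_apply continuous_const

lemma phiDiv_cont (h1 : ContDiff ℝ 1 ψ)
    {m τ τ' : ℝ → ℝ} (hm : ContinuousOn m (Ioi 0))
    (hτ : ContinuousOn τ (Ioo 0 (2 * π * a))) (hτ' : ContinuousOn τ' (Ioo 0 (2 * π * a))) :
    ContinuousOn (phiDiv ψ m τ τ') (wedgeU a) ∧ (∀ p ∉ tsupport ψ, phiDiv ψ m τ τ' p = 0) := by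
  constructor
  · have c1 := h1.continuous.continuousOn (s := wedgeU a)
    have c2 := (cont_fd h1 (0,1)).continuousOn (s := wedgeU a)
    exact (cont_fst (a := a) hm).mul (((cont_snd (a := a) hτ').mul (c1.pow 2)).add
      ((cont_snd (a := a) hτ).mul ((continuousOn_const.mul c1).mul c2)))
  · intro p hp
    simp [phiDiv, aux_zero hp]

lemma rDiv_cont (h1 : ContDiff ℝ 1 ψ)
    {m m' τ : ℝ → ℝ} (hm : ContinuousOn m (Ioi 0))
    (hm' : ContinuousOn m' (Ioi 0))
    (hτ : ContinuousOn τ (Ioo 0 (2 * π * a))) :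
    ContinuousOn (rDiv ψ m m' τ) (wedgeU a) ∧ (∀ p ∉ tsupport ψ, rDiv ψ m m' τ p = 0) := by
  constructor
  · have c1 := h1.continuous.continuousOn (s := wedgeU a)
    have c2 := (cont_fd h1 (1,0)).continuousOn (s := wedgeU a)
    exact (cont_snd (a := a) hτ).mul (((cont_fst (a := a) hm').mul (c1.pow 2)).add
      ((cont_fst (a := a) hm).mul ((continuousOn_const.mul c1).mul c2)))
  · intro p hp
    simp [rDiv, aux_zero hp]

lemma hasDeriv_snd (h1 : ContDiff ℝ 1 ψ) (r φ : ℝ) :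
    HasDerivAt (fun y => ψ (r, y)) (fderiv ℝ ψ (r, φ) (0, 1)) φ := by
  have hd : HasFDerivAt ψ (fderiv ℝ ψ (r, φ)) (r, φ) :=
    (h1.differentiable (by norm_num) _).hasFDerivAt
  exact hd.comp_hasDerivAt φ ((hasDerivAt_const φ r).prodMk (hasDerivAt_id φ))

lemma hasDeriv_fst (h1 : ContDiff ℝ 1 ψ) (r φ : ℝ) :
    HasDerivAt (fun y => ψ (y, φ)) (fderiv ℝ ψ (r, φ) (1, 0)) r := by
  have hd : HasFDerivAt ψ (fderiv ℝ ψ (r, φ)) (r, φ) :=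
    (h1.differentiable (by norm_num) _).hasFDerivAt
  exact hd.comp_hasDerivAt r ((hasDerivAt_id r).prodMk (hasDerivAt_const r φ))

lemma phiDiv_zero (ha : 0 < a) (h1 : ContDiff ℝ 1 ψ) (hc : HasCompactSupport ψ)
    (hs : tsupport ψ ⊆ wedgeU a) {m τ τ' : ℝ → ℝ} (hm : ContinuousOn m (Ioi 0))
    (hτ : ∀ x ∈ Ioo 0 (2 * π * a), HasDerivAt τ (τ' x) x)
    (hτ' : ContinuousOn τ' (Ioo 0 (2 * π * a))) :
    Integrable (phiDiv ψ m τ τ') ∧ ∫ p in wedgeUR a R, phiDiv ψ m τ τ' p = 0 := by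
  have hτc : ContinuousOn τ (Ioo 0 (2 * π * a)) :=
    fun x hx => (hτ x hx).continuousAt.continuousWithinAt
  obtain ⟨hF, h0⟩ := phiDiv_cont h1 hm hτc hτ'
  have hI := aux_int hc hs hF h0
  have hcont := aux_cont hs hF h0
  refine ⟨hI, ?_⟩
  unfold wedgeUR
  rw [Measure.volume_eq_prod, setIntegral_prod _ (by
    rw [← Measure.volume_eq_prod]; exact hI.integrableOn)]
  have : ∀ r, ∫ φ in Ioo 0 (2 * π * a), phiDiv ψ m τ τ' (r, φ) = 0 := by
    intro r
    have hpos : (0:ℝ) ≤ 2 * π * a := by positivity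
    rw [← integral_Ioc_eq_integral_Ioo, ← intervalIntegral.integral_of_le hpos]
    rw [intervalIntegral.integral_eq_sub_of_hasDerivAt
      (f := fun φ => m r * (τ φ * ψ (r, φ) ^ 2))]
    · have e0 : ψ (r, 0) = 0 := aux_zero fun h => by simpa using (hs h).2.1
      have e1 : ψ (r, 2 * π * a) = 0 := aux_zero fun h => by simpa using (hs h).2.2
      simp [e0, e1]
    · intro x _
      by_cases hp : (r, x) ∈ tsupport ψ
      · have := (((hτ x (hs hp).2).mul ((hasDeriv_snd h1 r x).pow 2)).const_mul (m r))
        refine HasDerivAt.congr_deriv this ?_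
        simp only [phiDiv, Pi.pow_apply]
        norm_num
      · rw [h0 _ hp]
        have : (fun φ => m r * (τ φ * ψ (r, φ) ^ 2)) =ᶠ[nhds x] fun _ => 0 := by
          have hc : Continuous (fun φ : ℝ => (r, φ)) := by fun_prop
          filter_upwards [hc.continuousAt.preimage_mem_nhds
            ((isClosed_tsupport ψ).isOpen_compl.mem_nhds hp)] with q hq
          simp [aux_zero hq]
        exact (hasDerivAt_const x (0:ℝ)).congr_of_eventuallyEq this
    · exact (hcont.comp (by fun_prop : Continuous (fun φ : ℝ => (r, φ)))).intervalIntegrable _ _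
  simp [this]

lemma rDiv_zero (hR : 0 < R) (h1 : ContDiff ℝ 1 ψ) (hc : HasCompactSupport ψ)
    (hs : tsupport ψ ⊆ wedgeU a) {g g' τ : ℝ → ℝ} (hg : ∀ x ∈ Ioi (0:ℝ), HasDerivAt g (g' x) x)
    (hg' : ContinuousOn g' (Ioi 0)) (hgR : g R = 0)
    (hτ : ContinuousOn τ (Ioo 0 (2 * π * a))) :
    Integrable (rDiv ψ g g' τ) ∧ ∫ p in wedgeUR a R, rDiv ψ g g' τ p = 0 := by
  have hgc : ContinuousOn g (Ioi 0) :=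
    fun x hx => (hg x hx).continuousAt.continuousWithinAt
  obtain ⟨hF, h0⟩ := rDiv_cont h1 hgc hg' hτ
  have hI := aux_int hc hs hF h0
  have hcont := aux_cont hs hF h0
  refine ⟨hI, ?_⟩
  unfold wedgeUR
  rw [Measure.volume_eq_prod, ← Measure.prod_restrict, integral_prod_symm _ (by
    rw [Measure.prod_restrict, ← Measure.volume_eq_prod]; exact hI.integrableOn)]
  have : ∀ φ, ∫ r in Ioo 0 R, rDiv ψ g g' τ (r, φ) = 0 := by
    intro φ
    rw [← integral_Ioc_eq_integral_Ioo, ← intervalIntegral.integral_of_le hR.le]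
    rw [intervalIntegral.integral_eq_sub_of_hasDerivAt
      (f := fun r => τ φ * (g r * ψ (r, φ) ^ 2))]
    · have e0 : ψ (0, φ) = 0 := aux_zero fun h => by simpa using (hs h).1
      simp [e0, hgR]
    · intro x _
      by_cases hp : (x, φ) ∈ tsupport ψ
      · have := (((hg x (hs hp).1).mul ((hasDeriv_fst h1 x φ).pow 2)).const_mul (τ φ))
        refine HasDerivAt.congr_deriv this ?_
        simp only [rDiv, Pi.pow_apply]
        norm_num
      · rw [h0 _ hp]
        have : (fun r => τ φ * (g r * ψ (r, φ) ^ 2)) =ᶠ[nhds x] fun _ => 0 := by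
          have hc : Continuous (fun r : ℝ => (r, φ)) := by fun_prop
          filter_upwards [hc.continuousAt.preimage_mem_nhds
            ((isClosed_tsupport ψ).isOpen_compl.mem_nhds hp)] with q hq
          simp [aux_zero hq]
        exact (hasDerivAt_const x (0:ℝ)).congr_of_eventuallyEq this
    · exact (hcont.comp (by fun_prop : Continuous (fun r : ℝ => (r, φ)))).intervalIntegrable _ _
  simp [this]

end


lemma pw0 {r z g x M u : ℝ} (hr : 0 < r) (hu0 : 0 ≤ u) (e6 : g ^ 2 ≤ M ^ 2 * r ^ 2) :
    r * z ^ 2 / 2 ≤ (r * z ^ 2 + 2 * g * z * x) + 2 * M ^ 2 * (x ^ 2 * r + u) := by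
  have h : 0 ≤ r * z ^ 2 / 2 + 2 * g * z * x + 2 * (g ^ 2 / r) * x ^ 2 := by
    have : r * z ^ 2 / 2 + 2 * g * z * x + 2 * (g ^ 2 / r) * x ^ 2
      = (r * z + 2 * g * x) ^ 2 / (2 * r) := by field_simp; ring
    rw [this]; positivity
  have h2 : g ^ 2 / r ≤ M ^ 2 * r := by
    rw [div_le_iff₀ hr]; nlinarith
  nlinarith [mul_le_mul_of_nonneg_right h2 (sq_nonneg x), mul_nonneg (sq_nonneg M) hu0]

lemma pw1 {k η P z y b n : ℝ} (hk : 0 < k) (ey : η ^ 2 * y ^ 2 ≤ b * n) :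
    η ^ 2 * z ^ 2 ≤ -(η ^ 2 * (P ^ 2 / k ^ 2 - z ^ 2 + 2 / k ^ 2 * (P * y)))
      + 2 / k ^ 2 * (η ^ 2 * P ^ 2) + b / k ^ 2 * n := by
  have h : -(η ^ 2 * (P ^ 2 / k ^ 2 - z ^ 2 + 2 / k ^ 2 * (P * y)))
      + 2 / k ^ 2 * (η ^ 2 * P ^ 2) + b / k ^ 2 * n - η ^ 2 * z ^ 2
      = (η ^ 2 * (P - y) ^ 2 + (b * n - η ^ 2 * y ^ 2)) / k ^ 2 := by
    field_simp; ring
  have : 0 ≤ (η ^ 2 * (P - y) ^ 2 + (b * n - η ^ 2 * y ^ 2)) / k ^ 2 := by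
    apply div_nonneg _ (by positivity)
    nlinarith [mul_nonneg (sq_nonneg η) (sq_nonneg (P - y))]
  linarith

/-- Young's inequality with a sign. -/
lemma young {σ A B d Z : ℝ} (hσ : σ ^ 2 = 1) (hd : 0 < d) (hB : B ^ 2 ≤ Z) :
    -(σ * (A * B)) ≤ d * A ^ 2 + Z / (4 * d) := by
  have h : d * A ^ 2 + σ * (A * B) + σ ^ 2 * B ^ 2 / (4 * d)
      = (2 * d * A + σ * B) ^ 2 / (4 * d) := by field_simp; ring
  have h' : 0 ≤ (2 * d * A + σ * B) ^ 2 / (4 * d) := by positivity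
  have h2 : B ^ 2 / (4 * d) ≤ Z / (4 * d) := by gcongr
  rw [hσ, one_mul] at h
  linarith

lemma pw2 {k δ b' K K1 n x y z P f η η' σ : ℝ} (hk : 0 < k) (hδ : 0 < δ)
    (hσ : σ ^ 2 = 1) (e1 : δ * η ^ 2 ≤ η ^ 2 * (σ * f))
    (ex : η ^ 2 * x ^ 2 ≤ b' * n) (ef : η ^ 2 * f ^ 2 * y ^ 2 ≤ K * n)
    (eη : η' ^ 2 * y ^ 2 ≤ K1 * n) :
    δ / 2 * (η ^ 2 * P ^ 2) ≤
      σ * (η ^ 2 * (x * P + f * P ^ 2 + f * P * y) - η * η' * z * y)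
      + k ^ 2 * δ / 8 * (η ^ 2 * z ^ 2)
      + (b' / δ + K / δ + 2 * K1 / (k ^ 2 * δ)) * n := by
  have a1 := young (A := η * P) (B := η * x) (d := δ / 4) (Z := b' * n) hσ (by positivity)
    (by nlinarith)
  have a2 := young (A := η * P) (B := η * f * y) (d := δ / 4) (Z := K * n) hσ (by positivity)
    (by nlinarith)
  have a3 := young (A := η * z) (B := -(η' * y)) (d := k ^ 2 * δ / 8) (Z := K1 * n) hσ
    (by positivity) (by nlinarith)
  have a4 := mul_le_mul_of_nonneg_right e1 (sq_nonneg P)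
  have r1 : b' * n / (4 * (δ / 4)) = b' / δ * n := by field_simp
  have r2 : K * n / (4 * (δ / 4)) = K / δ * n := by field_simp
  have r3 : K1 * n / (4 * (k ^ 2 * δ / 8)) = 2 * K1 / (k ^ 2 * δ) * n := by field_simp; ring
  rw [r1] at a1
  rw [r2] at a2
  rw [r3] at a3
  linarith

/-- pointwise inequality -/
lemma pointwise {k δ c M b b' K K1 : ℝ} (hk : 0 < k) (hδ : 0 < δ) (hc : 0 ≤ c)
    {r x y z P f g η η' σ : ℝ} (hr : 0 < r)
    (hσ : σ ^ 2 = 1) (e1 : δ * η ^ 2 ≤ η ^ 2 * (σ * f)) (e2 : η ^ 2 * r ≤ b)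
    (e3 : η ^ 2 ≤ b' * r) (e4 : η ^ 2 * f ^ 2 * r ≤ K) (e5 : η' ^ 2 * r ≤ K1)
    (e6 : g ^ 2 ≤ M ^ 2 * r ^ 2) :
    z ^ 2 * r ≤ 2 * ((r - c * η ^ 2) * z ^ 2 + 2 * g * z * x)
      - 4 * c * (η ^ 2 * (P ^ 2 / k ^ 2 - z ^ 2 + 2 / k ^ 2 * (P * y)))
      + 16 * c / (k ^ 2 * δ) * (σ * (η ^ 2 * (x * P + f * P ^ 2 + f * P * y) - η * η' * z * y))
      + (4 * M ^ 2 + 2 * c * (8 / (k ^ 2 * δ) * (b' / δ + K / δ + 2 * K1 / (k ^ 2 * δ))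
          + 2 * b / k ^ 2)) * (x ^ 2 * r + y ^ 2 / r) := by
  obtain ⟨u, hu⟩ : ∃ u, u = y ^ 2 / r := ⟨_, rfl⟩
  have hu0 : 0 ≤ u := by rw [hu]; positivity
  have hy : y ^ 2 = u * r := by rw [hu]; field_simp
  rw [← hu]
  have hxr : 0 ≤ x ^ 2 * r := by positivity
  have s0 := pw0 (z := z) (x := x) hr hu0 e6
  obtain ⟨n, hn⟩ : ∃ n, n = x ^ 2 * r + u := ⟨_, rfl⟩
  have hb0 : 0 ≤ b := le_trans (by positivity) e2
  have hb'0 : 0 ≤ b' := nonneg_of_mul_nonneg_left (le_trans (sq_nonneg η) e3) hr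
  have hK0 : 0 ≤ K := le_trans (by positivity) e4
  have hK10 : 0 ≤ K1 := le_trans (by positivity) e5
  have ey : η ^ 2 * y ^ 2 ≤ b * n := by
    rw [hy, hn]; linarith [mul_le_mul_of_nonneg_right e2 hu0, mul_nonneg hb0 hxr]
  have ex : η ^ 2 * x ^ 2 ≤ b' * n := by
    rw [hn]; linarith [mul_le_mul_of_nonneg_right e3 (sq_nonneg x), mul_nonneg hb'0 hu0]
  have ef : η ^ 2 * f ^ 2 * y ^ 2 ≤ K * n := by
    rw [hy, hn]; linarith [mul_le_mul_of_nonneg_right e4 hu0, mul_nonneg hK0 hxr]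
  have eη : η' ^ 2 * y ^ 2 ≤ K1 * n := by
    rw [hy, hn]; linarith [mul_le_mul_of_nonneg_right e5 hu0, mul_nonneg hK10 hxr]
  have s1 := pw1 (P := P) (z := z) hk ey
  have s2 := pw2 (P := P) (z := z) hk hδ hσ e1 ex ef eη
  rw [← hn] at s0 ⊢
  have h6 : 2 * ((r - c * η ^ 2) * z ^ 2 + 2 * g * z * x)
    = 2 * (r * z ^ 2 + 2 * g * z * x) - 2 * (c * (η ^ 2 * z ^ 2)) := by ring
  rw [h6]
  generalize r * z ^ 2 + 2 * g * z * x = T2 at *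
  generalize η ^ 2 * (P ^ 2 / k ^ 2 - z ^ 2 + 2 / k ^ 2 * (P * y)) = T4 at *
  generalize σ * (η ^ 2 * (x * P + f * P ^ 2 + f * P * y) - η * η' * z * y) = T3 at *
  generalize η ^ 2 * z ^ 2 = q1 at *
  generalize η ^ 2 * P ^ 2 = q2 at *
  generalize b' / δ + K / δ + 2 * K1 / (k ^ 2 * δ) = E at *
  have s3 : q1 ≤ -2 * T4 + 8 / (k ^ 2 * δ) * T3 + (8 / (k ^ 2 * δ) * E + 2 * b / k ^ 2) * n := by
    have h := mul_le_mul_of_nonneg_left s2 (by positivity : 0 ≤ 4 / (k ^ 2 * δ))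
    have h1 : 4 / (k ^ 2 * δ) * (δ / 2 * q2) = 2 / k ^ 2 * q2 := by field_simp; norm_num
    have h2 : 4 / (k ^ 2 * δ) * (T3 + k ^ 2 * δ / 8 * q1 + E * n)
      = 4 / (k ^ 2 * δ) * T3 + q1 / 2 + 4 / (k ^ 2 * δ) * E * n := by field_simp; ring
    rw [h1, h2] at h
    have h3 : (8 / (k ^ 2 * δ) * E + 2 * b / k ^ 2) * n
      = 2 * (4 / (k ^ 2 * δ) * E * n) + 2 * (b / k ^ 2 * n) := by ring
    have h4 : 8 / (k ^ 2 * δ) * T3 = 2 * (4 / (k ^ 2 * δ) * T3) := by ring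
    rw [h3, h4]
    linarith
  have s4 := mul_le_mul_of_nonneg_left s3 hc
  have : 16 * c / (k ^ 2 * δ) * T3 = 2 * (c * (8 / (k ^ 2 * δ) * T3)) := by ring
  rw [this]
  linarith


def dens (a : ℝ) (f : ℝ → ℝ) (ψ : ℝ × ℝ → ℝ) (p : ℝ × ℝ) : ℝ :=
  ((fderiv ℝ ψ p (1, 0) - f p.1 * fderiv ℝ ψ p (0, 1)) ^ 2
            + (fderiv ℝ ψ p (0, 1)) ^ 2 / p.1 ^ 2
            - (1 / (4 * a ^ 2)) * (ψ p) ^ 2 / p.1 ^ 2) * p.1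

lemma dens_int {a : ℝ} {f : ℝ → ℝ} {ψ : ℝ × ℝ → ℝ} (hf : ContinuousOn f (Ioi 0))
    (h1 : ContDiff ℝ 1 ψ) (hc : HasCompactSupport ψ)
    (hs : tsupport ψ ⊆ wedgeU a) : Integrable (dens a f ψ) := by
  refine aux_int hc hs ?_ ?_
  · have c1 := h1.continuous.continuousOn (s := wedgeU a)
    have c2 := (cont_fd h1 (0,1)).continuousOn (s := wedgeU a)
    have c3 := (cont_fd h1 (1,0)).continuousOn (s := wedgeU a)
    have c4 : ContinuousOn (fun p : ℝ × ℝ => p.1) (wedgeU a) := continuous_fst.continuousOn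
    have hne : ∀ p ∈ wedgeU a, p.1 ^ 2 ≠ 0 := fun p hp => pow_ne_zero _ (ne_of_gt hp.1)
    exact (((((c3.sub ((cont_fst hf).mul c2)).pow 2).add ((c2.pow 2).div (c4.pow 2) hne)).sub
      ((continuousOn_const.mul (c1.pow 2)).div (c4.pow 2) hne)).mul c4)
  · intro p hp
    simp [dens, aux_zero hp, aux_fzero hp]

lemma main_ineq {a R k δ c M b b' K K1 σ : ℝ} (ha : 0 < a) (hR : 0 < R) (hk : k = 1 / (2 * a))
    (hδ : 0 < δ) (hc : 0 ≤ c) (hσ : σ ^ 2 = 1) {f g η η' : ℝ → ℝ}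
    (hf : ContinuousOn f (Ioi 0))
    (hη : ∀ r, HasDerivAt η (η' r) r) (hη' : Continuous η') (hηR : η R = 0)
    (hg : ∀ r, HasDerivAt g (r - c * η r ^ 2) r) (hgR : g R = 0)
    (e1 : ∀ r ∈ Ioo 0 R, δ * η r ^ 2 ≤ η r ^ 2 * (σ * f r))
    (e2 : ∀ r ∈ Ioo 0 R, η r ^ 2 * r ≤ b)
    (e3 : ∀ r ∈ Ioo 0 R, η r ^ 2 ≤ b' * r)
    (e4 : ∀ r ∈ Ioo 0 R, η r ^ 2 * f r ^ 2 * r ≤ K)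
    (e5 : ∀ r ∈ Ioo 0 R, η' r ^ 2 * r ≤ K1)
    (e6 : ∀ r ∈ Ioo 0 R, g r ^ 2 ≤ M ^ 2 * r ^ 2) :
    ∃ Λ : ℝ, 0 ≤ Λ ∧ ∀ ψ : ℝ × ℝ → ℝ, ContDiff ℝ 1 ψ → HasCompactSupport ψ → tsupport ψ ⊆ wedgeU a →
      ∫ p in wedgeUR a R, ψ p ^ 2 * p.1 ≤ Λ * ∫ p in wedgeUR a R, dens a f ψ p := by
  have hk0 : 0 < k := by rw [hk]; positivity
  obtain ⟨Λ, hΛ⟩ : ∃ Λ, Λ = (4 * M ^ 2 + 2 * c * (8 / (k ^ 2 * δ) *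
    (b' / δ + K / δ + 2 * K1 / (k ^ 2 * δ)) + 2 * b / k ^ 2)) := ⟨_, rfl⟩
  have hΛ0 : 0 ≤ Λ := by
    have hm : R / 2 ∈ Ioo 0 R := ⟨by linarith, by linarith⟩
    have hb : 0 ≤ b := le_trans (by positivity) (e2 _ hm)
    have hb' : 0 ≤ b' := nonneg_of_mul_nonneg_left (le_trans (sq_nonneg _) (e3 _ hm)) hm.1
    have hK : 0 ≤ K := le_trans (by positivity) (e4 _ hm)
    have hK1 : 0 ≤ K1 := le_trans (by positivity) (e5 _ hm)
    rw [hΛ]; positivity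
  refine ⟨Λ, hΛ0, fun ψ h1 hcs hs => ?_⟩
  obtain ⟨t, ht⟩ : ∃ t : ℝ → ℝ, t = fun φ => Real.cos (k * φ) / Real.sin (k * φ) := ⟨_, rfl⟩
  obtain ⟨t', ht'⟩ : ∃ t' : ℝ → ℝ, t' = fun φ => - k * (1 + t φ ^ 2) := ⟨_, rfl⟩
  have hηc : Continuous η := continuous_iff_continuousAt.2 fun r => (hη r).continuousAt
  have hgc : Continuous g := continuous_iff_continuousAt.2 fun r => (hg r).continuousAt
  have htd : ∀ φ ∈ Ioo 0 (2 * π * a), HasDerivAt t (t' φ) φ := by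
    intro φ hφ
    have hsin : Real.sin (k * φ) ≠ 0 := by
      apply ne_of_gt
      apply Real.sin_pos_of_pos_of_lt_pi (mul_pos hk0 hφ.1)
      calc k * φ < k * (2 * π * a) := by gcongr; exact hφ.2
        _ = π := by rw [hk]; field_simp
    have hl : HasDerivAt (fun φ : ℝ => k * φ) k φ := by
      simpa using (hasDerivAt_id φ).const_mul k
    have := (hl.cos).div (hl.sin) hsin
    rw [ht', ht]
    refine HasDerivAt.congr_deriv this ?_
    field_simp
    ring
  have htc : ContinuousOn t (Ioo 0 (2 * π * a)) :=
    fun x hx => (htd x hx).continuousAt.continuousWithinAt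
  have htc' : ContinuousOn t' (Ioo 0 (2 * π * a)) := by
    rw [ht']
    exact continuousOn_const.mul (continuousOn_const.add (htc.pow 2))
  have hinv : ContinuousOn (fun r : ℝ => r⁻¹) (Ioi 0) :=
    continuousOn_inv₀.mono fun r hr => ne_of_gt hr
  have hone : ∀ x ∈ Ioo 0 (2 * π * a), HasDerivAt (fun _ : ℝ => (1:ℝ)) ((fun _ : ℝ => (0:ℝ)) x) x :=
    fun x _ => hasDerivAt_const x 1
  obtain ⟨i1, z1⟩ := rDiv_zero (τ := fun _ => 1) hR h1 hcs hs (fun r _ => hg r)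
    (by fun_prop) hgR continuousOn_const
  obtain ⟨i2, z2⟩ := phiDiv_zero (R := R) ha h1 hcs hs (hf.mul hgc.continuousOn) hone
    continuousOn_const
  obtain ⟨i3, z3⟩ := phiDiv_zero (R := R) (m := fun r => η r ^ 2) ha h1 hcs hs (by fun_prop) htd htc'
  obtain ⟨i4, z4⟩ := rDiv_zero (g := fun r => η r ^ 2) (g' := fun r => 2 * η r * η' r)
    (τ := t) hR h1 hcs hs
    (fun r _ => ((hη r).pow 2).congr_deriv (by simp)) (by fun_prop) (by simp [hηR]) htc
  obtain ⟨i5, z5⟩ := phiDiv_zero (R := R) (m := fun r => η r * η' r) ha h1 hcs hs (by fun_prop) hone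
    continuousOn_const
  obtain ⟨i6, z6⟩ := phiDiv_zero (R := R) ha h1 hcs hs hinv htd htc'
  have i7 := dens_int hf h1 hcs hs
  have hmeas : MeasurableSet (wedgeUR a R) := measurableSet_Ioo.prod measurableSet_Ioo
  have i0 : Integrable (fun p : ℝ × ℝ => ψ p ^ 2 * p.1) := by
    refine aux_int hcs hs ?_ ?_
    · exact ((h1.continuous.pow 2).mul continuous_fst).continuousOn
    · intro p hp; simp [aux_zero hp]
  have key := setIntegral_mono_on (s := wedgeUR a R) i0.integrableOn
    (Integrable.integrableOn
      (((((((i1.const_mul 2).add (i2.const_mul (-2))).add (i3.const_mul (-4 * c / k))).add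
      (i4.const_mul (16 * c / (k ^ 2 * δ) * σ * (k / 2)))).add
      (i5.const_mul (- (16 * c / (k ^ 2 * δ) * σ * (1 / 2))))).add
      (i6.const_mul (-(Λ * k)))).add (i7.const_mul Λ))) hmeas ?_
  · refine key.trans (le_of_eq ?_)
    have j1 := (i1.const_mul 2).integrableOn (s := wedgeUR a R)
    have j2 := (i2.const_mul (-2)).integrableOn (s := wedgeUR a R)
    have j3 := (i3.const_mul (-4 * c / k)).integrableOn (s := wedgeUR a R)
    have j4 := (i4.const_mul (16 * c / (k ^ 2 * δ) * σ * (k / 2))).integrableOn (s := wedgeUR a R)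
    have j5 := (i5.const_mul (- (16 * c / (k ^ 2 * δ) * σ * (1 / 2)))).integrableOn (s := wedgeUR a R)
    have j6 := (i6.const_mul (-(Λ * k))).integrableOn (s := wedgeUR a R)
    have j7 := (i7.const_mul Λ).integrableOn (s := wedgeUR a R)
    rw [integral_add' (((((j1.add j2).add j3).add j4).add j5).add j6) j7,
      integral_add' ((((j1.add j2).add j3).add j4).add j5) j6,
      integral_add' (((j1.add j2).add j3).add j4) j5,
      integral_add' ((j1.add j2).add j3) j4,
      integral_add' (j1.add j2) j3,
      integral_add' j1 j2]
    simp only [integral_const_mul]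
    rw [z1, z2, z3, z4, z5, z6]
    ring
  · rintro ⟨r, φ⟩ ⟨hr, hφ⟩
    have hr0 : 0 < r := hr.1
    simp only at hr hφ
    have P := pointwise (x := fderiv ℝ ψ (r, φ) (1, 0) - f r * fderiv ℝ ψ (r, φ) (0, 1))
      (y := fderiv ℝ ψ (r, φ) (0, 1) - k * t φ * ψ (r, φ)) (z := ψ (r, φ))
      (P := k * t φ * ψ (r, φ)) hk0 hδ hc hr0 hσ
      (e1 r hr) (e2 r hr) (e3 r hr) (e4 r hr) (e5 r hr) (e6 r hr)
    rw [← hΛ] at P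
    refine P.trans (le_of_eq ?_)
    have hka : 1 / (4 * a ^ 2) = k ^ 2 := by rw [hk]; field_simp; norm_num
    simp only [Pi.add_apply, phiDiv, rDiv, dens, ht', hka, Pi.mul_apply]
    generalize fderiv ℝ ψ (r, φ) (1, 0) = ψr
    generalize fderiv ℝ ψ (r, φ) (0, 1) = ψφ
    generalize ψ (r, φ) = z
    generalize t φ = s
    generalize f r = fr
    generalize g r = gr
    generalize η r = e
    generalize η' r = e'
    clear P
    have hr1 : r ≠ 0 := hr0.ne'
    have hk1 : k ≠ 0 := hk0.ne'
    have A1 : (ψr - fr * ψφ) ^ 2 * r + (ψφ - k * s * z) ^ 2 / r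
      = -k * (r⁻¹ * (-k * (1 + s ^ 2) * z ^ 2 + s * (2 * z * ψφ))) +
        ((ψr - fr * ψφ) ^ 2 + ψφ ^ 2 / r ^ 2 - k ^ 2 * z ^ 2 / r ^ 2) * r := by
      field_simp; ring
    have A2 : e ^ 2 * ((k * s * z) ^ 2 / k ^ 2 - z ^ 2 + 2 / k ^ 2 * (k * s * z * (ψφ - k * s * z)))
      = 1 / k * (e ^ 2 * (-k * (1 + s ^ 2) * z ^ 2 + s * (2 * z * ψφ))) := by
      field_simp; ring
    rw [A1, A2]
    ring

/-- **Positivity of the local Hardy constant for non-trivially curved wedges.**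
If `a ∈ (0,1]`, `θ ∈ C¹((0,∞))` with `r θ'(r)` bounded and `θ'` not identically zero,
then there is `R₀ > 0` such that `λ(R,θ') > 0` for all `R ≥ R₀`. -/
theorem lamRayleigh_pos
    (a : ℝ) (ha : a ∈ Ioc (0:ℝ) 1)
    (θ θ' : ℝ → ℝ)
    (hderiv : ∀ r ∈ Ioi (0:ℝ), HasDerivAt θ (θ' r) r)
    (hcont : ContinuousOn θ' (Ioi 0))
    (C : ℝ) (hC : ∀ r ∈ Ioi (0:ℝ), |r * θ' r| ≤ C)
    (hne : ∃ r ∈ Ioi (0:ℝ), θ' r ≠ 0) :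
    ∃ R₀ > 0, ∀ R ≥ R₀, 0 < lamRayleigh a R θ' := by
  obtain ⟨ha0, -⟩ := ha
  obtain ⟨r0, hr0, hf0⟩ := hne
  have hr0 : 0 < r0 := hr0
  obtain ⟨σ, hσ, hσf⟩ : ∃ σ : ℝ, σ ^ 2 = 1 ∧ 0 < σ * θ' r0 := by
    rcases lt_or_gt_of_ne hf0 with h | h
    · exact ⟨-1, by norm_num, by linarith⟩
    · exact ⟨1, by norm_num, by linarith⟩
  obtain ⟨δ, hδ, hδf⟩ : ∃ δ, 0 < δ ∧ δ < σ * θ' r0 := ⟨σ * θ' r0 / 2, by linarith, by linarith⟩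
  have hnhds : Ioo (r0 / 2) (2 * r0) ∩ {r | δ < σ * θ' r} ∈ nhds r0 := by
    apply Filter.inter_mem
    · exact Ioo_mem_nhds (by linarith) (by linarith)
    · have : ContinuousAt (fun r => σ * θ' r) r0 :=
        continuousAt_const.mul (hcont.continuousAt (Ioi_mem_nhds hr0))
      exact this.eventually (lt_mem_nhds hδf)
  obtain ⟨η, hηs, hηc, hη1, hηr, hη0⟩ :=
    exists_contDiff_tsupport_subset (n := 1) hnhds
  have hsup : ∀ r, η r ≠ 0 → r ∈ Ioo (r0 / 2) (2 * r0) ∩ {r | δ < σ * θ' r} :=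
    fun r hr => hηs (subset_tsupport _ hr)
  have hηle : ∀ r, η r ^ 2 ≤ 1 := by
    intro r
    have := hηr (mem_range_self r)
    nlinarith [this.1, this.2]
  have hηcont : Continuous η := hη1.continuous
  refine ⟨2 * r0, by linarith, fun R hR => ?_⟩
  have hR0 : 0 < R := by linarith
  have hηR : η R = 0 := by
    by_contra h
    have := (hsup R h).1.2
    linarith
  have hη2c : Continuous (fun r => η r ^ 2) := by fun_prop
  have hWpos : 0 < ∫ r in (0:ℝ)..R, η r ^ 2 := by
    apply intervalIntegral.integral_pos hR0 hη2c.continuousOn (fun r _ => sq_nonneg _)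
    exact ⟨r0, ⟨hr0.le, by linarith⟩, by rw [hη0]; norm_num⟩
  obtain ⟨c, hcdef⟩ : ∃ c, c = (R ^ 2 / 2) / ∫ r in (0:ℝ)..R, η r ^ 2 := ⟨_, rfl⟩
  have hc0 : 0 < c := by rw [hcdef]; positivity
  obtain ⟨K1, hK1⟩ : ∃ K1, ∀ r ∈ Icc 0 R, deriv η r ^ 2 * r ≤ K1 := by
    have hcd : Continuous (deriv η) := hη1.continuous_deriv (by norm_num)
    have : Continuous (fun r => deriv η r ^ 2 * r) := by fun_prop
    obtain ⟨K1, hK1⟩ := (isCompact_Icc (a := (0:ℝ)) (b := R)).bddAbove_image this.continuousOn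
    exact ⟨K1, fun r hr => hK1 (mem_image_of_mem _ hr)⟩
  obtain ⟨Λ, hΛ0, hΛ⟩ := main_ineq (a := a) (R := R) (k := 1 / (2 * a)) (δ := δ) (c := c)
    (M := R / 2 + c) (b := 2 * r0) (b' := 2 / r0) (K := 2 / r0 * C ^ 2) (K1 := K1) (σ := σ)
    (f := θ') (g := fun r => r ^ 2 / 2 - c * ∫ s in (0:ℝ)..r, η s ^ 2) (η := η) (η' := deriv η)
    ha0 hR0 rfl hδ hc0.le hσ hcont
    (fun r => (hη1.differentiable (by norm_num) r).hasDerivAt)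
    (hη1.continuous_deriv (by norm_num)) hηR
    (by
      intro r
      have h1 : HasDerivAt (fun r : ℝ => r ^ 2 / 2) r r :=
        ((hasDerivAt_pow 2 r).div_const 2).congr_deriv (by simp)
      exact h1.sub ((hη2c.integral_hasStrictDerivAt 0 r).hasDerivAt.const_mul c))
    (by
      simp only [hcdef]
      field_simp
      ring)
    (by
      intro r hr
      by_cases h : η r = 0
      · simp [h]
      · have h2 : δ < σ * θ' r := (hsup r h).2
        nlinarith [sq_nonneg (η r)])
    (by
      intro r hr
      by_cases h : η r = 0
      · simp [h, hr0.le]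
      · have h2 := (hsup r h).1.2
        nlinarith [sq_nonneg (η r), hηle r, hr.1])
    (by
      intro r hr
      by_cases h : η r = 0
      · have := hr.1
        rw [h, zero_pow two_ne_zero]; positivity
      · have h2 := (hsup r h).1.1
        refine (hηle r).trans ?_
        rw [div_mul_eq_mul_div, le_div_iff₀ hr0]; linarith)
    (by
      intro r hr
      by_cases h : η r = 0
      · rw [h, zero_pow two_ne_zero, zero_mul, zero_mul]; positivity
      · have h2 := (hsup r h).1.1
        have hr1 := hr.1
        have h3 : (r * θ' r) ^ 2 ≤ C ^ 2 := sq_le_sq' (abs_le.1 (hC r hr1)).1 (abs_le.1 (hC r hr1)).2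
        have h4 : η r ^ 2 ≤ 2 / r0 * r := by
          refine (hηle r).trans ?_
          rw [div_mul_eq_mul_div, le_div_iff₀ hr0]; linarith
        calc η r ^ 2 * θ' r ^ 2 * r ≤ (2 / r0 * r) * θ' r ^ 2 * r := by gcongr
          _ = 2 / r0 * (r * θ' r) ^ 2 := by ring
          _ ≤ _ := by gcongr)
    (fun r hr => hK1 r ⟨hr.1.le, hr.2.le⟩)
    (by
      intro r hr
      have hr1 := hr.1
      have hr2 := hr.2
      have w0 : 0 ≤ ∫ s in (0:ℝ)..r, η s ^ 2 :=
        intervalIntegral.integral_nonneg hr1.le (fun s _ => sq_nonneg _)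
      have w1 : ∫ s in (0:ℝ)..r, η s ^ 2 ≤ r := by
        have := intervalIntegral.integral_mono_on (μ := volume) hr1.le (hη2c.intervalIntegrable 0 r)
          (continuous_const.intervalIntegrable (μ := volume) 0 r) (fun s _ => hηle s)
        simpa using this
      rw [← mul_pow]
      apply sq_le_sq'
      · nlinarith [mul_le_mul_of_nonneg_left w1 hc0.le, mul_pos hR0 hr1, sq_nonneg r]
      · nlinarith [mul_nonneg hc0.le w0, mul_pos hc0 hr1])
  have hopen : IsOpen (wedgeUR a R) := isOpen_Ioo.prod isOpen_Ioo
  have hDpos : ∀ ψ : ℝ × ℝ → ℝ, ContDiff ℝ 1 ψ → HasCompactSupport ψ →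
      (¬ ∀ p ∈ wedgeUR a R, ψ p = 0) → 0 < ∫ p in wedgeUR a R, ψ p ^ 2 * p.1 := by
    intro ψ h1 hcs hnz
    push Not at hnz
    obtain ⟨p, hp, hpz⟩ := hnz
    have hcont : Continuous (fun p : ℝ × ℝ => ψ p ^ 2 * p.1) :=
      (h1.continuous.pow 2).mul continuous_fst
    have hint : Integrable (fun p : ℝ × ℝ => ψ p ^ 2 * p.1) :=
      hcont.integrable_of_hasCompactSupport (HasCompactSupport.intro hcs (fun q hq => by
        simp [aux_zero hq]))
    rw [setIntegral_pos_iff_support_of_nonneg_ae _ hint.integrableOn]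
    · apply IsOpen.measure_pos
      · exact (hcont.isOpen_support).inter hopen
      · have := hp.1.1
        exact ⟨p, by simp [hpz, this.ne'], hp⟩
    · filter_upwards [ae_restrict_mem hopen.measurableSet] with q hq
      have := hq.1.1
      simp only [Pi.zero_apply]
      positivity
  have hlow : ∀ q ∈ { q : ℝ | ∃ ψ : ℝ × ℝ → ℝ,
    ContDiff ℝ 1 ψ ∧ HasCompactSupport ψ ∧ tsupport ψ ⊆ wedgeU a ∧
    (¬ ∀ p ∈ wedgeUR a R, ψ p = 0) ∧
    q = (∫ p in wedgeUR a R,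
          ((fderiv ℝ ψ p (1, 0) - θ' p.1 * fderiv ℝ ψ p (0, 1)) ^ 2
            + (fderiv ℝ ψ p (0, 1)) ^ 2 / p.1 ^ 2
            - (1 / (4 * a ^ 2)) * (ψ p) ^ 2 / p.1 ^ 2) * p.1)
        / (∫ p in wedgeUR a R, (ψ p) ^ 2 * p.1) }, 1 / (|Λ| + 1) ≤ q := by
    rintro q ⟨ψ, h1, hcs, hs, hnz, rfl⟩
    have hD := hDpos ψ h1 hcs hnz
    have hL := hΛ ψ h1 hcs hs
    change _ ≤ (∫ p in wedgeUR a R, dens a θ' ψ p) / _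
    generalize (∫ p in wedgeUR a R, dens a θ' ψ p) = N at *
    generalize (∫ p in wedgeUR a R, ψ p ^ 2 * p.1) = D at *
    rw [div_le_div_iff₀ (by positivity) hD]
    have hnn : 0 ≤ |Λ| := abs_nonneg Λ
    rcases le_or_gt 0 N with h | h
    · nlinarith [le_abs_self Λ]
    · nlinarith [mul_nonneg hΛ0 (neg_nonneg.2 h.le)]
  have hne : { q : ℝ | ∃ ψ : ℝ × ℝ → ℝ,
    ContDiff ℝ 1 ψ ∧ HasCompactSupport ψ ∧ tsupport ψ ⊆ wedgeU a ∧
    (¬ ∀ p ∈ wedgeUR a R, ψ p = 0) ∧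
    q = (∫ p in wedgeUR a R,
          ((fderiv ℝ ψ p (1, 0) - θ' p.1 * fderiv ℝ ψ p (0, 1)) ^ 2
            + (fderiv ℝ ψ p (0, 1)) ^ 2 / p.1 ^ 2
            - (1 / (4 * a ^ 2)) * (ψ p) ^ 2 / p.1 ^ 2) * p.1)
        / (∫ p in wedgeUR a R, (ψ p) ^ 2 * p.1) }.Nonempty := by
    have hmem : (r0, π * a) ∈ wedgeUR a R := by
      have := mul_pos Real.pi_pos ha0
      refine ⟨⟨hr0, by simp only; linarith⟩, ⟨this, by simp only; linarith⟩⟩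
    obtain ⟨ψ, hs, hcs, h1, -, hv⟩ :=
      exists_contDiff_tsupport_subset (n := 1) (hopen.mem_nhds hmem)
    refine ⟨_, ψ, by exact_mod_cast h1, hcs, ?_, ?_, rfl⟩
    · exact hs.trans (fun p hp => ⟨hp.1.1, hp.2⟩)
    · intro h
      rw [h _ hmem] at hv
      norm_num at hv
  have := le_csInf hne hlow
  exact lt_of_lt_of_le (by positivity) this
end
end

section
/- Let r₀ > 0. Then for every continuously differentiable function g with compact support in (r₀,∞) one has ∫_{r₀}^∞ |g'(r)|² r dr ≥ (1/4) ∫_{r₀}^∞ |g(r)|² / (r² (log(r/r₀))²) · r dr. -/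
open MeasureTheory Real Set

noncomputable section

theorem aux_cd (r₀ : ℝ) (g w : ℝ → ℝ) (hg : ContDiff ℝ 1 g) (hgc : HasCompactSupport g)
    (hgsupp : tsupport g ⊆ Ioi r₀) (hw : ∀ x ∈ Ioi r₀, ContDiffAt ℝ 1 w x) :
    ContDiff ℝ 1 (fun r => g r * w r) ∧ HasCompactSupport (fun r => g r * w r) := by
  refine ⟨?_, HasCompactSupport.mul_right hgc⟩
  rw [contDiff_iff_contDiffAt]
  intro x
  by_cases hx : x ∈ tsupport (fun r => g r * w r)
  swap
  · exact contDiffAt_const.congr_of_eventuallyEq (notMem_tsupport_iff_eventuallyEq.1 hx)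
  exact hg.contDiffAt.mul (hw x (hgsupp (tsupport_mul_subset_left hx)))

/-- **One-dimensional logarithmic Hardy inequality.**
For `r₀ > 0` and every `C¹` function `g` with compact support in `(r₀,∞)`,
`∫_{r₀}^∞ g'(r)² r dr ≥ (1/4) ∫_{r₀}^∞ g(r)²/(r² log²(r/r₀)) r dr`. -/
theorem one_dim_log_hardy
    (r₀ : ℝ) (hr₀ : 0 < r₀)
    (g : ℝ → ℝ) (hg : ContDiff ℝ 1 g) (hgc : HasCompactSupport g)
    (hgsupp : tsupport g ⊆ Ioi r₀) :
    ∫ r in Ioi r₀, (deriv g r) ^ 2 * r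
      ≥ (1 / 4) * ∫ r in Ioi r₀, (g r) ^ 2 / (r ^ 2 * (Real.log (r / r₀)) ^ 2) * r := by
  have hL : ∀ x ∈ Ioi r₀, 0 < Real.log (x / r₀) := fun x hx =>
    Real.log_pos ((one_lt_div hr₀).2 hx)
  have hLd : ∀ x ∈ Ioi r₀, ContDiffAt ℝ 1 (fun r => Real.log (r / r₀)) x := fun x hx =>
    (contDiffAt_id.div_const r₀).log (div_pos (hr₀.trans hx) hr₀).ne'
  obtain ⟨hF, hFc⟩ := aux_cd r₀ g (fun r => g r * (Real.log (r / r₀))⁻¹) hg hgc hgsupp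
    (fun x hx => hg.contDiffAt.mul ((hLd x hx).inv (hL x hx).ne'))
  obtain ⟨hP, hPc⟩ := aux_cd r₀ g (fun r => g r * ((r ^ 2 * (Real.log (r / r₀)) ^ 2)⁻¹ * r))
    hg hgc hgsupp (fun x hx => hg.contDiffAt.mul ((((contDiffAt_id.pow 2).mul
      ((hLd x hx).pow 2)).inv (by
        have h1 := hL x hx
        have h2 : 0 < x := hr₀.trans hx
        simp only [id]; positivity)).mul contDiffAt_id))
  set F : ℝ → ℝ := fun r => g r * (g r * (Real.log (r / r₀))⁻¹) with hFdef
  have hPI : Integrable (fun r => (g r) ^ 2 / (r ^ 2 * (Real.log (r / r₀)) ^ 2) * r) := by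
    have := hP.continuous.integrable_of_hasCompactSupport (μ := volume) hPc
    refine this.congr (Filter.Eventually.of_forall fun r => ?_)
    simp only [div_eq_mul_inv]; ring
  have hQI : Integrable (fun r => (deriv g r) ^ 2 * r) := by
    have hc : Continuous (deriv g) := hg.continuous_deriv le_rfl
    refine Continuous.integrable_of_hasCompactSupport (by fun_prop) ?_
    have : HasCompactSupport (fun r => deriv g r * (deriv g r * r)) :=
      HasCompactSupport.mul_right hgc.deriv
    have e : (fun r => (deriv g r) ^ 2 * r) = fun r => deriv g r * (deriv g r * r) := by
      funext r; ring
    rw [e]; exact this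
  have hDI : Integrable (deriv F) :=
    (hF.continuous_deriv le_rfl).integrable_of_hasCompactSupport hFc.deriv
  have hD0 : ∫ r, deriv F r = 0 :=
    integral_eq_zero_of_hasDerivAt_of_integrable
      (fun x => (hF.differentiable one_ne_zero x).hasDerivAt) hDI
      (hF.continuous.integrable_of_hasCompactSupport hFc)
  have hF0 : ∫ r in Ioi r₀, deriv F r = 0 := by
    rw [setIntegral_eq_integral_of_forall_compl_eq_zero, hD0]
    intro x hx
    by_contra h
    have h1 : x ∈ tsupport F := support_deriv_subset h
    exact hx (hgsupp (tsupport_mul_subset_left h1))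
  have key : ∫ r in Ioi r₀, ((1/2) * deriv F r
      + (1/4) * ((g r) ^ 2 / (r ^ 2 * (Real.log (r / r₀)) ^ 2) * r))
      ≤ ∫ r in Ioi r₀, (deriv g r) ^ 2 * r := by
    refine setIntegral_mono_on ((hDI.const_mul _).add (hPI.const_mul _)).integrableOn
      hQI.integrableOn measurableSet_Ioi ?_
    intro x hx
    have hx0 : 0 < x := hr₀.trans hx
    have hl := hL x hx
    have hgd : HasDerivAt g (deriv g x) x := (hg.differentiable one_ne_zero x).hasDerivAt
    have hld : HasDerivAt (fun r => Real.log (r / r₀)) (1 / r₀ / (x / r₀)) x :=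
      ((hasDerivAt_id x).div_const r₀).log (div_pos hx0 hr₀).ne'
    have hFd := (hgd.mul (hgd.mul (hld.inv hl.ne'))).deriv
    have hFd' : deriv F x = _ := hFd
    rw [hFd']
    simp only [Pi.mul_apply, Pi.inv_apply]
    set l := Real.log (x / r₀)
    have : 0 ≤ x * (deriv g x - g x / (2 * x * l)) ^ 2 := by positivity
    rw [← sub_nonneg]
    refine this.trans_eq (Eq.symm ?_)
    field_simp
    ring
  rw [integral_add (hDI.const_mul _).integrableOn (hPI.const_mul _).integrableOn,
    integral_const_mul, integral_const_mul, hF0] at key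
  linarith
end
end

section
/- Let a ∈ (0,1], let R > 0, set r₀ := R/2, and let ξ : (0,∞) → [0,1] be a smooth function with ξ = 0 on (0,r₀] and ξ = 1 on [R,∞), with bounded derivative. Then for every ψ ∈ C¹_c(U) one has ∫_U |ψ(r,φ)|²/(1 + r² (log(r/r₀))²) r dr dφ ≤ 16 ∫_U |∂_rψ(r,φ)|² r dr dφ + (16 ‖ξ'‖_∞² + 2) ∫_{U_R} |ψ(r,φ)|² r dr dφ, where ‖ξ'‖_∞ := sup_{r>0} |ξ'(r)|. -/
open MeasureTheory Real Set

noncomputable section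

lemma pw_aux (f f' x x' l w r : ℝ) (hr : 0 < r) (hl : 0 < l)
    (hw : w ≤ 1 / (r ^ 2 * l ^ 2)) (hw0 : 0 ≤ w)  :
    f ^ 2 * w * r + 4 * ((2 * f * f' * x ^ 2 + f ^ 2 * (2 * x * x')) * l⁻¹
      + f ^ 2 * x ^ 2 * (-(r⁻¹) / l ^ 2))
     ≤ 16 * (x ^ 2 * (f' ^ 2 * r)) + 16 * x' ^ 2 * (f ^ 2 * r)
        + 2 * (1 - x) ^ 2 * w * (f ^ 2 * r) := by
  have h1 : f ^ 2 * w * r ≤ 2 * (x * f) ^ 2 * w * r + 2 * (1 - x) ^ 2 * w * (f ^ 2 * r) := by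
    have : 0 ≤ w * r * f ^ 2 * (2 * x - 1) ^ 2 := by positivity
    nlinarith
  have h2 : 2 * (x * f) ^ 2 * w * r ≤ 2 * (x * f) ^ 2 * (1 / (r ^ 2 * l ^ 2)) * r := by
    gcongr
  have h3 : 2 * (x * f) ^ 2 * (1 / (r ^ 2 * l ^ 2)) * r
      + 4 * ((2 * f * f' * x ^ 2 + f ^ 2 * (2 * x * x')) * l⁻¹
      + f ^ 2 * x ^ 2 * (-(r⁻¹) / l ^ 2)) =
      8 * r * (x * f' + x' * f) ^ 2 - 2 / r * ((x * f) / l - 2 * r * (x * f' + x' * f)) ^ 2 := by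
    field_simp
    ring
  have h4 : 0 ≤ 2 / r * ((x * f) / l - 2 * r * (x * f' + x' * f)) ^ 2 := by positivity
  have h5 : 0 ≤ 8 * r * (x * f' - x' * f) ^ 2 := by positivity
  nlinarith

lemma exists_eps (c B : ℝ) (hc : 0 < c) (hB : c < B) :
    ∃ e : ℝ, 0 < e ∧ ∀ r, c < r → r ≤ B →
      r ^ 2 * (Real.log (r / c) + e) ^ 2 ≤ 1 + r ^ 2 * Real.log (r / c) ^ 2 := by
  have hLB : 0 < Real.log (B / c) := Real.log_pos (by rwa [one_lt_div hc])
  have hB0 : 0 < B := hc.trans hB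
  set K := B ^ 2 * (2 * Real.log (B / c) + 1) with hK
  have hKp : 0 < K := by positivity
  refine ⟨min 1 (1 / K), by positivity, fun r hr hrB => ?_⟩
  have he0 : 0 < min 1 (1 / K) := by positivity
  have he1 : min 1 (1 / K) ≤ 1 := min_le_left _ _
  have he2 : K * min 1 (1 / K) ≤ 1 := by
    calc K * min 1 (1 / K) ≤ K * (1 / K) := by gcongr; exact min_le_right _ _
      _ = 1 := by field_simp
  set e := min 1 (1 / K)
  have hr0 : 0 < r := hc.trans hr
  have hL : 0 < Real.log (r / c) := Real.log_pos (by rwa [one_lt_div hc])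
  have hLL : Real.log (r / c) ≤ Real.log (B / c) := by gcongr
  have : r ^ 2 * (e * (2 * Real.log (r / c) + e)) ≤ B ^ 2 * (e * (2 * Real.log (B / c) + 1)) := by
    gcongr
  nlinarith

lemma one_dim (R : ℝ) (hR : 0 < R)
    (ξ : ℝ → ℝ) (hξ : ContDiffOn ℝ (⊤ : ℕ∞) ξ (Ioi 0))
    (hrange : ∀ r ∈ Ioi (0:ℝ), ξ r ∈ Icc (0:ℝ) 1)
    (hzero : ∀ r ∈ Ioc (0:ℝ) (R / 2), ξ r = 0)
    (hone : ∀ r ∈ Ici R, ξ r = 1)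
    (M : ℝ) (hM : ∀ r ∈ Ioi (0:ℝ), |deriv ξ r| ≤ M)
    (f f' : ℝ → ℝ) (hf : ∀ r, HasDerivAt f (f' r) r) (hf' : Continuous f')
    (B : ℝ) (hB : R / 2 < B) (hfB : ∀ r, r ∉ Icc 0 B → f r = 0) 
    (hfB' : ∀ r, r ∉ Icc 0 B → f' r = 0) :
    ∫ r in Ioi (0:ℝ), (f r) ^ 2 / (1 + r ^ 2 * (Real.log (r / (R / 2))) ^ 2) * r
      ≤ 16 * (∫ r in Ioi (0:ℝ), (f' r) ^ 2 * r)
        + (16 * M ^ 2 + 2) * ∫ r in Ioo (0:ℝ) R, (f r) ^ 2 * r := by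
  have hc : 0 < R / 2 := by positivity
  set c := R / 2 with hcdef
  have hcf : Continuous f := continuous_iff_continuousAt.2 fun r => (hf r).continuousAt
  obtain ⟨e, he, hee⟩ := exists_eps c B hc hB
  have iC : Integrable (fun r => (f r) ^ 2 * r) := by
    apply Continuous.integrable_of_hasCompactSupport (by fun_prop)
    exact HasCompactSupport.intro (isCompact_Icc (a := 0) (b := B)) fun r hr => by simp [hfB r hr]
  have iB : Integrable (fun r => (f' r) ^ 2 * r) := by
    apply Continuous.integrable_of_hasCompactSupport (by fun_prop)
    exact HasCompactSupport.intro (isCompact_Icc (a := 0) (b := B)) fun r hr => by simp [hfB' r hr]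
  have iA : Integrable (fun r => (f r) ^ 2 / (1 + r ^ 2 * (Real.log (r / c)) ^ 2) * r) := by
    refine iC.mono (by
      have := hcf.measurable
      apply Measurable.aestronglyMeasurable
      fun_prop) (Filter.Eventually.of_forall fun r => ?_)
    rw [norm_mul, norm_mul]
    gcongr
    rw [Real.norm_of_nonneg (by positivity), Real.norm_of_nonneg (by positivity)]
    apply div_le_self (by positivity)
    have : 0 ≤ r ^ 2 * (Real.log (r / c)) ^ 2 := by positivity
    linarith
  have hξd : ∀ r, 0 < r → HasDerivAt ξ (deriv ξ r) r := fun r hr =>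
    ((hξ.differentiableOn (by simp)).differentiableAt (Ioi_mem_nhds hr)).hasDerivAt
  have hξc : ContinuousOn (deriv ξ) (Ioi 0) :=
    hξ.continuousOn_deriv_of_isOpen isOpen_Ioi (by simp)
  set k : ℝ → ℝ := fun r => (f r) ^ 2 * (ξ r) ^ 2 * (Real.log (r / c) + e)⁻¹ with hk
  set k' : ℝ → ℝ := fun r => (2 * f r * f' r * ξ r ^ 2 + f r ^ 2 * (2 * ξ r * deriv ξ r))
      * (Real.log (r / c) + e)⁻¹ + f r ^ 2 * ξ r ^ 2 * (-(r⁻¹) / (Real.log (r / c) + e) ^ 2) with hk'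
  have hLnn : ∀ r, c ≤ r → 0 ≤ Real.log (r / c) := fun r hr =>
    Real.log_nonneg (by rwa [one_le_div hc])
  have hkd : ∀ r ∈ Icc c B, HasDerivAt k (k' r) r := by
    intro r hr
    have hr0 : 0 < r := hc.trans_le hr.1
    have hl : Real.log (r / c) + e ≠ 0 := by have := hLnn r hr.1; positivity
    have h1 : HasDerivAt (fun r => Real.log (r / c) + e) (r⁻¹) r := by
      have := (((hasDerivAt_id r).div_const c).log (by simp; exact ⟨hr0.ne', hc.ne'⟩)).add_const e
      refine HasDerivAt.congr_deriv this ?_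
      simp only [id]
      field_simp
    have := (((hf r).pow 2).mul ((hξd r hr0).pow 2)).mul (h1.inv hl)
    refine HasDerivAt.congr_deriv this ?_
    simp only [hk', Pi.pow_apply, Pi.mul_apply, Pi.inv_apply]
    push_cast
    ring
  have hk'c : ContinuousOn k' (Icc c B) := by
    have hs : Icc c B ⊆ Ioi 0 := fun r hr => hc.trans_le hr.1
    have h1 := hξc.mono hs
    have h2 := hξ.continuousOn.mono hs
    have h3 : ContinuousOn (fun r => Real.log (r / c) + e) (Icc c B) := by
      apply ContinuousOn.add _ continuousOn_const
      apply ContinuousOn.log (by fun_prop)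
      intro r hr
      have := hs hr
      exact (div_pos this hc).ne'
    have h4 : ∀ r ∈ Icc c B, Real.log (r / c) + e ≠ 0 := by
      intro r hr; have := hLnn r hr.1; positivity
    have h5 : ContinuousOn (fun r : ℝ => r⁻¹) (Icc c B) :=
      continuousOn_id.inv₀ fun r hr => (hs hr).ne'
    have h6 := hcf.continuousOn (s := Icc c B)
    have h7 := hf'.continuousOn (s := Icc c B)
    exact (((((continuousOn_const.mul h6).mul h7).mul (h2.pow 2)).add
      ((h6.pow 2).mul ((continuousOn_const.mul h2).mul h1))).mul (h3.inv₀ h4)).add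
      (((h6.pow 2).mul (h2.pow 2)).mul (h5.neg.div (h3.pow 2) fun r hr => pow_ne_zero 2 (h4 r hr)))
  have hfBz : f B = 0 := by
    have : IsClosed {r | f r = 0} := isClosed_eq hcf continuous_const
    have h2 : closure (Ioi B) ⊆ {r | f r = 0} :=
      closure_minimal (fun r hr => hfB r fun h => absurd h.2 (not_le.2 hr)) this
    rw [closure_Ioi] at h2
    exact h2 (self_mem_Ici)
  have hkint : ∫ r in Ioc c B, k' r = 0 := by
    rw [← intervalIntegral.integral_of_le hB.le,
      intervalIntegral.integral_eq_sub_of_hasDerivAt (f := k)]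
    · simp [hk, hfBz, hzero c ⟨hc, le_rfl⟩]
    · rwa [uIcc_of_le hB.le]
    · apply ContinuousOn.intervalIntegrable
      rwa [uIcc_of_le hB.le]
  have iD : Integrable ((Ioc c B).indicator k') := by
    rw [integrable_indicator_iff measurableSet_Ioc]
    exact (hk'c.integrableOn_Icc).mono_set Ioc_subset_Icc_self
  have hD0 : ∫ r in Ioi (0:ℝ), (Ioc c B).indicator k' r = 0 := by
    rw [setIntegral_indicator measurableSet_Ioc, inter_eq_self_of_subset_right, hkint]
    exact fun r hr => hc.trans hr.1
  have iE : Integrable ((Ioo 0 R).indicator (fun r => (f r) ^ 2 * r)) :=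
    iC.indicator measurableSet_Ioo
  have hE : ∫ r in Ioi (0:ℝ), (Ioo 0 R).indicator (fun r => (f r) ^ 2 * r) r
      = ∫ r in Ioo (0:ℝ) R, (f r) ^ 2 * r := by
    rw [setIntegral_indicator measurableSet_Ioo, inter_eq_self_of_subset_right]
    exact fun r hr => hr.1
  have key : ∫ r in Ioi (0:ℝ), (f r) ^ 2 / (1 + r ^ 2 * (Real.log (r / c)) ^ 2) * r
      ≤ ∫ r in Ioi (0:ℝ), (16 * ((f' r) ^ 2 * r) + (16 * M ^ 2 + 2) *
        (Ioo 0 R).indicator (fun r => (f r) ^ 2 * r) r - 4 * (Ioc c B).indicator k' r) := by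
    apply setIntegral_mono_on iA.integrableOn _ measurableSet_Ioi
    · intro r hr
      have hr0 : 0 < r := hr
      have hW : 1 ≤ 1 + r ^ 2 * (Real.log (r / c)) ^ 2 := by
        have : 0 ≤ r ^ 2 * (Real.log (r / c)) ^ 2 := by positivity
        linarith
      have hfr : 0 ≤ f r ^ 2 * r := by positivity
      have hfr' : 0 ≤ f' r ^ 2 * r := by positivity
      rcases le_or_gt r c with h | h
      · rw [indicator_of_mem (show r ∈ Ioo 0 R from ⟨hr0, by linarith⟩),
          indicator_of_notMem (fun h' => absurd h'.1 (not_lt.2 h))]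
        have : (f r) ^ 2 / (1 + r ^ 2 * (Real.log (r / c)) ^ 2) * r ≤ f r ^ 2 * r := by
          gcongr
          exact div_le_self (by positivity) hW
        nlinarith [mul_nonneg (sq_nonneg M) hfr]
      rcases lt_or_ge B r with h2 | h2
      · have hz : f r = 0 := hfB r fun h' => absurd h'.2 (not_le.2 h2)
        rw [indicator_of_notMem (show r ∉ Ioc c B from fun h' => absurd h'.2 (not_le.2 h2))]
        have : (Ioo 0 R).indicator (fun r => (f r) ^ 2 * r) r = 0 := by
          simp [indicator, hz]
        rw [this, hz]
        simp
        positivity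
      have hl : 0 < Real.log (r / c) + e := by have := hLnn r h.le; positivity
      have hx := hrange r hr
      have hpw := pw_aux (f r) (f' r) (ξ r) (deriv ξ r) (Real.log (r / c) + e)
        (1 / (1 + r ^ 2 * (Real.log (r / c)) ^ 2)) r hr0 hl
        (by apply one_div_le_one_div_of_le (by positivity) (hee r h h2)) (by positivity)
      rw [indicator_of_mem (show r ∈ Ioc c B from ⟨h, h2⟩)]
      have hw1 : 1 / (1 + r ^ 2 * (Real.log (r / c)) ^ 2) ≤ 1 := by
        rw [div_le_one (by positivity)]; exact hW
      have hw0 : 0 ≤ 1 / (1 + r ^ 2 * (Real.log (r / c)) ^ 2) := by positivity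
      rw [div_eq_mul_one_div]
      set w := 1 / (1 + r ^ 2 * (Real.log (r / c)) ^ 2)
      have hx2 : ξ r ^ 2 * (f' r ^ 2 * r) ≤ f' r ^ 2 * r :=
        mul_le_of_le_one_left hfr' (pow_le_one₀ hx.1 hx.2)
      rcases lt_or_ge r R with h3 | h3
      · rw [indicator_of_mem (show r ∈ Ioo 0 R from ⟨hr0, h3⟩)]
        have hd : deriv ξ r ^ 2 ≤ M ^ 2 := by
          rw [← sq_abs (deriv ξ r)]
          exact pow_le_pow_left₀ (abs_nonneg _) (hM r hr) 2
        have h4 : 16 * deriv ξ r ^ 2 * (f r ^ 2 * r) ≤ 16 * M ^ 2 * (f r ^ 2 * r) := by gcongr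
        have h5 : 2 * (1 - ξ r) ^ 2 * w * (f r ^ 2 * r) ≤ 2 * 1 * 1 * (f r ^ 2 * r) := by
          gcongr
          exact pow_le_one₀ (by linarith [hx.2]) (by linarith [hx.1])
        simp only [hk']
        linarith
      · rw [indicator_of_notMem (fun h' => absurd h'.2 (not_lt.2 h3))]
        have h4 : ξ r = 1 := hone r h3
        have h5 : deriv ξ r = 0 := by
          apply IsLocalMax.deriv_eq_zero
          filter_upwards [Ioi_mem_nhds hr0] with y hy
          rw [h4]; exact (hrange y hy).2
        simp only [hk']
        rw [h4, h5] at hpw ⊢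
        linarith
    · exact (((iB.const_mul 16).add (iE.const_mul _)).sub (iD.const_mul 4)).integrableOn
  refine key.trans (le_of_eq ?_)
  rw [integral_sub, integral_add, integral_const_mul, integral_const_mul, integral_const_mul, hD0, hE]
  · simp
  · exact (iB.const_mul 16).integrableOn
  · exact (iE.const_mul _).integrableOn
  · exact ((iB.const_mul 16).add (iE.const_mul _)).integrableOn
  · exact (iD.const_mul 4).integrableOn

lemma fub (g : ℝ × ℝ → ℝ) (hg : Integrable g) (s t : Set ℝ) :
    ∫ p in s ×ˢ t, g p = ∫ y in t, ∫ x in s, g (x, y) := by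
  rw [Measure.volume_eq_prod, ← Measure.prod_restrict, integral_prod_symm]
  rw [Measure.prod_restrict]
  exact hg.integrableOn

lemma fubi (g : ℝ × ℝ → ℝ) (hg : Integrable g) (s t : Set ℝ) :
    IntegrableOn (fun y => ∫ x in s, g (x, y)) t := by
  have : Integrable g ((volume.restrict s).prod (volume.restrict t)) := by
    rw [Measure.prod_restrict]
    exact hg.integrableOn
  exact this.integral_prod_right

/-- **Cutoff smearing estimate for the logarithmic Hardy weight.**
With `r₀ = R/2` and a smooth cutoff `ξ : (0,∞) → [0,1]` vanishing on `(0,r₀]`, equal to `1`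
on `[R,∞)` and with derivative bounded by `M`, every `ψ ∈ C¹_c(U)` satisfies
`∫_U ψ²/(1 + r² log²(r/r₀)) r dr dφ
  ≤ 16 ∫_U |∂_rψ|² r dr dφ + (16 M² + 2) ∫_{U_R} ψ² r dr dφ`. -/
theorem cutoff_smearing
    (a : ℝ) (ha : a ∈ Ioc (0:ℝ) 1) (R : ℝ) (hR : 0 < R)
    (ξ : ℝ → ℝ) (hξ : ContDiffOn ℝ (⊤ : ℕ∞) ξ (Ioi 0))
    (hrange : ∀ r ∈ Ioi (0:ℝ), ξ r ∈ Icc (0:ℝ) 1)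
    (hzero : ∀ r ∈ Ioc (0:ℝ) (R / 2), ξ r = 0)
    (hone : ∀ r ∈ Ici R, ξ r = 1)
    (M : ℝ) (hM : ∀ r ∈ Ioi (0:ℝ), |deriv ξ r| ≤ M) :
    ∀ ψ : ℝ × ℝ → ℝ,
      ContDiff ℝ 1 ψ → HasCompactSupport ψ → tsupport ψ ⊆ wedgeU a →
      ∫ p in wedgeU a, (ψ p) ^ 2 / (1 + p.1 ^ 2 * (Real.log (p.1 / (R / 2))) ^ 2) * p.1
        ≤ 16 * (∫ p in wedgeU a, (fderiv ℝ ψ p (1, 0)) ^ 2 * p.1)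
          + (16 * M ^ 2 + 2) * ∫ p in wedgeUR a R, (ψ p) ^ 2 * p.1 := by
  intro ψ hψ hcs hts
  have hψc := hψ.continuous
  have hdc : Continuous (fun p => fderiv ℝ ψ p (1, 0)) :=
    (hψ.continuous_fderiv (by simp)).clm_apply continuous_const
  obtain ⟨B0, hB0⟩ : ∃ B0 : ℝ, ∀ p ∈ tsupport ψ, p.1 ≤ B0 := by
    obtain ⟨b, hb⟩ := (IsCompact.image hcs continuous_fst).bddAbove
    exact ⟨b, fun p hp => hb (mem_image_of_mem _ hp)⟩
  set B := max B0 R with hBdef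
  have hB : R / 2 < B := lt_of_lt_of_le (by linarith) (le_max_right _ _)
  have hout : ∀ r y, r ∉ Icc 0 B → (r, y) ∉ tsupport ψ := by
    intro r y hr h
    exact hr ⟨(hts h).1.le, (hB0 _ h).trans (le_max_left _ _)⟩
  have iC : Integrable (fun p : ℝ × ℝ => (ψ p) ^ 2 * p.1) := by
    apply Continuous.integrable_of_hasCompactSupport (by fun_prop)
    exact HasCompactSupport.intro hcs fun r hr => by simp [image_eq_zero_of_notMem_tsupport hr]
  have hdz : ∀ p, p ∉ tsupport ψ → fderiv ℝ ψ p (1, 0) = 0 := by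
    intro p hp
    rw [image_eq_zero_of_notMem_tsupport (fun h => hp (tsupport_fderiv_subset ℝ h))]
    simp
  have iB : Integrable (fun p : ℝ × ℝ => (fderiv ℝ ψ p (1, 0)) ^ 2 * p.1) := by
    apply Continuous.integrable_of_hasCompactSupport (by fun_prop)
    exact HasCompactSupport.intro hcs fun r hr => by simp [hdz r hr]
  have iA : Integrable (fun p : ℝ × ℝ =>
      (ψ p) ^ 2 / (1 + p.1 ^ 2 * (Real.log (p.1 / (R / 2))) ^ 2) * p.1) := by
    refine iC.mono (by
      have := hψc.measurable
      apply Measurable.aestronglyMeasurable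
      fun_prop) (Filter.Eventually.of_forall fun p => ?_)
    rw [norm_mul, norm_mul]
    gcongr
    rw [Real.norm_of_nonneg (by positivity), Real.norm_of_nonneg (by positivity)]
    apply div_le_self (by positivity)
    have : 0 ≤ p.1 ^ 2 * (Real.log (p.1 / (R / 2))) ^ 2 := by positivity
    linarith
  unfold wedgeU wedgeUR
  rw [fub _ iA, fub _ iB, fub _ iC, ← integral_const_mul, ← integral_const_mul, ← integral_add]
  · apply setIntegral_mono_on (fubi _ iA _ _) _ measurableSet_Ioo
    · intro y _
      refine one_dim R hR ξ hξ hrange hzero hone M hM (fun r => ψ (r, y))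
        (fun r => fderiv ℝ ψ (r, y) (1, 0)) ?_ ?_ B hB ?_ ?_
      · intro r
        have h1 : HasDerivAt (fun r : ℝ => (r, y)) ((1:ℝ), (0:ℝ)) r :=
          (hasDerivAt_id r).prodMk (hasDerivAt_const r y)
        exact ((hψ.differentiable (by simp)) (r, y)).hasFDerivAt.comp_hasDerivAt r h1
      · exact hdc.comp (by fun_prop : Continuous fun r : ℝ => (r, y))
      · exact fun r hr => image_eq_zero_of_notMem_tsupport (hout r y hr)
      · exact fun r hr => hdz _ (hout r y hr)
    · exact ((fubi _ iB _ _).const_mul 16).add ((fubi _ iC _ _).const_mul _)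
  · exact (fubi _ iB _ _).const_mul 16
  · exact (fubi _ iC _ _).const_mul _
end
end

section
/- Let a ∈ (0,1], let θ ∈ C¹((0,∞)) with C := sup_{r>0} |r θ'(r)| < ∞ and ‖θ'‖_∞ := sup_{r>0} |θ'(r)| < ∞, and suppose the support of θ' is contained in [0,R] for some R > 0. Let ε ∈ (0,1) satisfy (ε/(1−ε)) C² ≤ 1. Then for every ψ ∈ C¹_c(U) one has ∫_U [ |∂_rψ − θ'(r)∂_φψ|² + |∂_φψ|²/r² − (1/(4a²)) |ψ|²/r² ] r dr dφ ≥ ε ∫_U |∂_rψ|² r dr dφ − (ε/(1−ε)) (‖θ'‖_∞²/(4a²)) ∫_{U_R} |ψ|² r dr dφ. -/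
open MeasureTheory Real Set

noncomputable section

theorem poincare_aux (a : ℝ) (ha : 0 < a) (f f' : ℝ → ℝ) (hf : ∀ x, HasDerivAt f (f' x) x)
    (hf' : Continuous f') (hs : tsupport f ⊆ Ioo 0 (2 * π * a)) :
    0 ≤ ∫ x in Ioo (0:ℝ) (2 * π * a), ((f' x) ^ 2 - 1 / (4 * a ^ 2) * (f x) ^ 2) := by
  have hpos : 0 < 2 * π * a := by positivity
  have hfc : Continuous f := continuous_iff_continuousAt.2 fun x => (hf x).continuousAt
  set g : ℝ → ℝ := fun x => (f x) ^ 2 * (cos (x / (2 * a)) / sin (x / (2 * a)) / (2 * a)) with hg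
  have hsin : ∀ x ∈ Ioo (0:ℝ) (2 * π * a), 0 < sin (x / (2 * a)) := by
    intro x hx
    apply sin_pos_of_pos_of_lt_pi
    · have := hx.1; positivity
    · rw [div_lt_iff₀ (by positivity)]; linarith [hx.2]
  have hder : ∀ x ∈ Ioo (0:ℝ) (2 * π * a), HasDerivAt g
      (2 * f x * f' x * (cos (x / (2 * a)) / sin (x / (2 * a)) / (2 * a))
        + (f x) ^ 2 * (-(1 / (4 * a ^ 2))
          - (cos (x / (2 * a)) / sin (x / (2 * a)) / (2 * a)) ^ 2)) x := by
    intro x hx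
    have h0 := hsin x hx
    have hl : HasDerivAt (fun x : ℝ => x / (2 * a)) (1 / (2 * a)) x :=
      (hasDerivAt_id x).div_const _
    have h1 := ((hf x).pow 2).mul (((hl.cos).div (hl.sin) h0.ne').div_const (2 * a))
    refine h1.congr_deriv ?_
    simp only [Pi.pow_apply, Pi.div_apply]
    have h2 := sin_sq_add_cos_sq (x / (2 * a))
    have h3 := h0.ne'
    field_simp
    ring
  have hend : ∀ x, x ∉ Ioo (0:ℝ) (2 * π * a) → ContinuousAt g x := by
    intro x hx
    have h1 : f =ᶠ[nhds x] 0 := notMem_tsupport_iff_eventuallyEq.1 fun h => hx (hs h)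
    have h2 : g =ᶠ[nhds x] fun _ => 0 := by
      filter_upwards [h1] with y hy
      simp [hg, hy]
    exact continuousAt_const.congr h2.symm
  have hgc : ContinuousOn g (Icc 0 (2 * π * a)) := by
    intro x _
    by_cases hx : x ∈ Ioo (0:ℝ) (2 * π * a)
    · exact (hder x hx).continuousAt.continuousWithinAt
    · exact (hend x hx).continuousWithinAt
  have hz : ∀ x, x ∉ Ioo (0:ℝ) (2 * π * a) → g x = 0 := by
    intro x hx
    have : f x = 0 := image_eq_zero_of_notMem_tsupport fun h => hx (hs h)
    simp [hg, this]
  have key := intervalIntegral.sub_le_integral_of_hasDeriv_right_of_le hpos.le hgc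
    (fun x hx => (hder x hx).hasDerivWithinAt)
    (φ := fun x => (f' x) ^ 2 - 1 / (4 * a ^ 2) * (f x) ^ 2)
    (Continuous.integrableOn_Icc (by fun_prop))
    (fun x hx => by
      nlinarith [sq_nonneg (f' x - f x * (cos (x / (2 * a)) / sin (x / (2 * a)) / (2 * a)))])
  rw [hz _ (by simp), hz _ (by simp), sub_zero, intervalIntegral.integral_of_le hpos.le,
    integral_Ioc_eq_integral_Ioo] at key
  exact key

theorem pointwise_aux (x y z k ε r t s b : ℝ) (hε : 0 < ε) (hε1 : ε < 1) (hr : 0 < r)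
    (hk : k = ε / (1 - ε)) (hy : y = t * z) :
    ε * (x ^ 2 * r) + (z ^ 2 - b * s ^ 2) * ((1 / r ^ 2 - k * t ^ 2) * r)
      - k * b * (t ^ 2 * (s ^ 2 * r)) ≤ ((x - y) ^ 2 + z ^ 2 / r ^ 2 - b * s ^ 2 / r ^ 2) * r := by
  have h1 : 0 < 1 - ε := by linarith
  have h : ε * x ^ 2 - k * y ^ 2 ≤ (x - y) ^ 2 := by
    have : (x - y) ^ 2 - (ε * x ^ 2 - k * y ^ 2) = ((1 - ε) * x - y) ^ 2 / (1 - ε) := by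
      rw [hk]; field_simp; ring
    have : 0 ≤ ((1 - ε) * x - y) ^ 2 / (1 - ε) := by positivity
    linarith
  have h2 := mul_le_mul_of_nonneg_right h hr.le
  have h3 : ((x - y) ^ 2 + z ^ 2 / r ^ 2 - b * s ^ 2 / r ^ 2) * r -
    (ε * (x ^ 2 * r) + (z ^ 2 - b * s ^ 2) * ((1 / r ^ 2 - k * t ^ 2) * r)
      - k * b * (t ^ 2 * (s ^ 2 * r))) = (x - y) ^ 2 * r - (ε * x ^ 2 - k * y ^ 2) * r := by
    rw [hy]; ring
  linarith

/-- **Lower bound on the shifted Hardy form by the radial energy.**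
If `|r θ'(r)| ≤ C`, `|θ'(r)| ≤ M` on `(0,∞)`, `θ'` is supported in `[0,R]`, and
`ε ∈ (0,1)` satisfies `(ε/(1-ε)) C² ≤ 1`, then for every `ψ ∈ C¹_c(U)`,
`∫_U [ |∂_rψ - θ'∂_φψ|² + |∂_φψ|²/r² - ψ²/(4a²r²) ] r dr dφ
  ≥ ε ∫_U |∂_rψ|² r dr dφ - (ε/(1-ε)) (M²/(4a²)) ∫_{U_R} ψ² r dr dφ`. -/
theorem shifted_form_radial_lower_bound
    (a : ℝ) (ha : a ∈ Ioc (0:ℝ) 1)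
    (θ θ' : ℝ → ℝ)
    (hderiv : ∀ r ∈ Ioi (0:ℝ), HasDerivAt θ (θ' r) r)
    (hcont : ContinuousOn θ' (Ioi 0))
    (C : ℝ) (hC : ∀ r ∈ Ioi (0:ℝ), |r * θ' r| ≤ C)
    (M : ℝ) (hM : ∀ r ∈ Ioi (0:ℝ), |θ' r| ≤ M)
    (R : ℝ) (hR : 0 < R) (hsupp : ∀ r ∈ Ioi (0:ℝ), R < r → θ' r = 0)
    (ε : ℝ) (hε : ε ∈ Ioo (0:ℝ) 1) (hεC : ε / (1 - ε) * C ^ 2 ≤ 1) :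
    ∀ ψ : ℝ × ℝ → ℝ,
      ContDiff ℝ 1 ψ → HasCompactSupport ψ → tsupport ψ ⊆ wedgeU a →
      (∫ p in wedgeU a,
          ((fderiv ℝ ψ p (1, 0) - θ' p.1 * fderiv ℝ ψ p (0, 1)) ^ 2
            + (fderiv ℝ ψ p (0, 1)) ^ 2 / p.1 ^ 2
            - (1 / (4 * a ^ 2)) * (ψ p) ^ 2 / p.1 ^ 2) * p.1)
        ≥ ε * (∫ p in wedgeU a, (fderiv ℝ ψ p (1, 0)) ^ 2 * p.1)
          - ε / (1 - ε) * (M ^ 2 / (4 * a ^ 2))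
            * ∫ p in wedgeUR a R, (ψ p) ^ 2 * p.1 := by
  intro ψ hψ hcs hts
  have ha0 := ha.1
  have hk0 : 0 ≤ ε / (1 - ε) := div_nonneg hε.1.le (by linarith [hε.2])
  obtain ⟨k, hk⟩ : ∃ k, k = ε / (1 - ε) := ⟨_, rfl⟩
  obtain ⟨b, hb⟩ : ∃ b, b = 1 / (4 * a ^ 2) := ⟨_, rfl⟩
  have hb0 : 0 ≤ b := by rw [hb]; positivity
  have hM4 : M ^ 2 / (4 * a ^ 2) = M ^ 2 * b := by rw [hb]; ring
  rw [hM4]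
  rw [← hb]
  rw [← hk] at hεC hk0 ⊢
  have hmU : MeasurableSet (wedgeU a) := measurableSet_Ioi.prod measurableSet_Ioo
  have hmUR : MeasurableSet (wedgeUR a R) := measurableSet_Ioo.prod measurableSet_Ioo
  have hsub : wedgeUR a R ⊆ wedgeU a := fun p hp => ⟨hp.1.1, hp.2⟩
  have hfd : Continuous (fderiv ℝ ψ) := hψ.continuous_fderiv one_ne_zero
  have hψc : Continuous ψ := hψ.continuous
  have hxc : Continuous fun p => fderiv ℝ ψ p (1, 0) := hfd.clm_apply continuous_const
  have hzc : Continuous fun p => fderiv ℝ ψ p (0, 1) := hfd.clm_apply continuous_const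
  have htc : ContinuousOn (fun p : ℝ × ℝ => θ' p.1) (wedgeU a) :=
    hcont.comp continuousOn_fst fun p hp => hp.1
  have hrc : ContinuousOn (fun p : ℝ × ℝ => p.1) (wedgeU a) := continuousOn_fst
  have hr0 : ∀ p ∈ wedgeU a, p.1 ≠ 0 := fun p hp => ne_of_gt hp.1
  have hr20 : ∀ p ∈ wedgeU a, p.1 ^ 2 ≠ 0 := fun p hp => pow_ne_zero 2 (hr0 p hp)
  have hψ0 : ∀ p, p ∉ tsupport ψ → ψ p = 0 := fun p hp => image_eq_zero_of_notMem_tsupport hp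
  have hfd0 : ∀ p, p ∉ tsupport ψ → fderiv ℝ ψ p = 0 := fun p hp => by
    by_contra h
    exact hp (support_fderiv_subset ℝ h)
  have hint : ∀ f : ℝ × ℝ → ℝ, ContinuousOn f (wedgeU a) → (∀ p, p ∉ tsupport ψ → f p = 0) →
      IntegrableOn f (wedgeU a) := by
    intro f hf h0
    have h1 : IntegrableOn f (tsupport ψ) := (hf.mono hts).integrableOn_compact hcs
    exact h1.of_forall_sdiff_eq_zero hmU fun p hp => h0 p hp.2
  have hxc' := hxc.continuousOn (s := wedgeU a)
  have hzc' := hzc.continuousOn (s := wedgeU a)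
  have hψc' := hψc.continuousOn (s := wedgeU a)
  have iA : IntegrableOn (fun p : ℝ × ℝ =>
      ((fderiv ℝ ψ p (1, 0) - θ' p.1 * fderiv ℝ ψ p (0, 1)) ^ 2
            + (fderiv ℝ ψ p (0, 1)) ^ 2 / p.1 ^ 2
            - b * (ψ p) ^ 2 / p.1 ^ 2) * p.1) (wedgeU a) := by
    apply hint
    · exact ((((hxc'.sub (htc.mul hzc')).pow 2).add ((hzc'.pow 2).div (hrc.pow 2) hr20)).sub
        ((continuousOn_const.mul (hψc'.pow 2)).div (hrc.pow 2) hr20)).mul hrc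
    · intro p hp
      simp [hψ0 p hp, hfd0 p hp]
  have iX : IntegrableOn (fun p : ℝ × ℝ => (fderiv ℝ ψ p (1, 0)) ^ 2 * p.1) (wedgeU a) := by
    apply hint
    · exact (hxc'.pow 2).mul hrc
    · intro p hp
      simp [hfd0 p hp]
  have iB : IntegrableOn (fun p : ℝ × ℝ => ((fderiv ℝ ψ p (0, 1)) ^ 2 - b * (ψ p) ^ 2)
      * ((1 / p.1 ^ 2 - k * θ' p.1 ^ 2) * p.1)) (wedgeU a) := by
    apply hint
    · exact ((hzc'.pow 2).sub (continuousOn_const.mul (hψc'.pow 2))).mul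
        (((continuousOn_const.div (hrc.pow 2) hr20).sub
          (continuousOn_const.mul (htc.pow 2))).mul hrc)
    · intro p hp
      simp [hψ0 p hp, hfd0 p hp]
  have iT : IntegrableOn (fun p : ℝ × ℝ => θ' p.1 ^ 2 * ((ψ p) ^ 2 * p.1)) (wedgeU a) := by
    apply hint
    · exact (htc.pow 2).mul ((hψc'.pow 2).mul hrc)
    · intro p hp
      simp [hψ0 p hp]
  have iP : IntegrableOn (fun p : ℝ × ℝ => (ψ p) ^ 2 * p.1) (wedgeU a) := by
    apply hint
    · exact (hψc'.pow 2).mul hrc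
    · intro p hp
      simp [hψ0 p hp]
  have hmain : ∫ p in wedgeU a, (ε * ((fderiv ℝ ψ p (1, 0)) ^ 2 * p.1)
      + ((fderiv ℝ ψ p (0, 1)) ^ 2 - b * (ψ p) ^ 2) * ((1 / p.1 ^ 2 - k * θ' p.1 ^ 2) * p.1)
      - k * b * (θ' p.1 ^ 2 * ((ψ p) ^ 2 * p.1))) ≤ ∫ p in wedgeU a,
          ((fderiv ℝ ψ p (1, 0) - θ' p.1 * fderiv ℝ ψ p (0, 1)) ^ 2
            + (fderiv ℝ ψ p (0, 1)) ^ 2 / p.1 ^ 2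
            - b * (ψ p) ^ 2 / p.1 ^ 2) * p.1 := by
    refine setIntegral_mono_on (((iX.const_mul ε).add iB).sub (iT.const_mul (k * b))) iA hmU ?_
    intro p hp
    exact pointwise_aux _ _ _ k ε p.1 (θ' p.1) _ b hε.1 hε.2 hp.1 hk rfl
  have e1 := integral_sub ((iX.const_mul ε).add iB) (iT.const_mul (k * b))
  have e2 := integral_add (iX.const_mul ε) iB
  simp only [Pi.add_apply] at e1
  rw [e1, e2, integral_const_mul, integral_const_mul] at hmain
  have hR0 : θ' R = 0 := by
    have h1 : Filter.Tendsto θ' (nhdsWithin R (Ioi R)) (nhds (θ' R)) :=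
      ((hcont.continuousAt (Ioi_mem_nhds hR)).tendsto).mono_left nhdsWithin_le_nhds
    have h2 : Filter.Tendsto θ' (nhdsWithin R (Ioi R)) (nhds 0) := by
      refine tendsto_const_nhds.congr' ?_
      filter_upwards [self_mem_nhdsWithin] with r hr
      exact (hsupp r (hR.trans hr) hr).symm
    exact tendsto_nhds_unique h1 h2
  have hT : ∫ p in wedgeU a, θ' p.1 ^ 2 * ((ψ p) ^ 2 * p.1)
      ≤ M ^ 2 * ∫ p in wedgeUR a R, (ψ p) ^ 2 * p.1 := by
    rw [setIntegral_eq_of_subset_of_forall_sdiff_eq_zero hmU hsub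
      (f := fun p : ℝ × ℝ => θ' p.1 ^ 2 * ((ψ p) ^ 2 * p.1)), ← integral_const_mul]
    · refine setIntegral_mono_on (iT.mono_set hsub) ((iP.mono_set hsub).const_mul _) hmUR ?_
      intro p hp
      have h0 : 0 < p.1 := hp.1.1
      refine mul_le_mul_of_nonneg_right ?_ (by positivity)
      exact sq_le_sq' (abs_le.1 (hM _ h0)).1 (abs_le.1 (hM _ h0)).2
    · rintro p ⟨hp, hp2⟩
      have h0 : θ' p.1 = 0 := by
        have h1 : R ≤ p.1 := by
          by_contra h
          exact hp2 ⟨⟨hp.1, not_le.1 h⟩, hp.2⟩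
        rcases h1.eq_or_lt with h | h
        · rw [← h, hR0]
        · exact hsupp _ hp.1 h
      simp [h0]
  have hB : 0 ≤ ∫ p in wedgeU a, ((fderiv ℝ ψ p (0, 1)) ^ 2 - b * (ψ p) ^ 2)
      * ((1 / p.1 ^ 2 - k * θ' p.1 ^ 2) * p.1) := by
    have hiB := iB
    unfold wedgeU at hiB ⊢
    rw [Measure.volume_eq_prod] at hiB ⊢
    rw [setIntegral_prod _ hiB]
    refine setIntegral_nonneg measurableSet_Ioi fun r hr => ?_
    have hr' : 0 < r := hr
    simp only []
    rw [integral_mul_const]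
    refine mul_nonneg ?_ (mul_nonneg ?_ hr'.le)
    · rw [hb]
      refine poincare_aux a ha0 (fun x => ψ (r, x)) (fun x => fderiv ℝ ψ (r, x) (0, 1)) ?_ ?_ ?_
      · intro x
        have h1 : HasFDerivAt ψ (fderiv ℝ ψ (r, x)) (r, x) :=
          (hψ.differentiable one_ne_zero _).hasFDerivAt
        exact h1.comp_hasDerivAt x ((hasDerivAt_const x r).prodMk (hasDerivAt_id x))
      · exact hzc.comp (by fun_prop)
      · intro x hx
        have := tsupport_comp_subset_preimage ψ (f := fun x : ℝ => (r, x)) (by fun_prop) hx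
        exact (hts this).2
    · have h1 : (r * θ' r) ^ 2 ≤ C ^ 2 := sq_le_sq' (abs_le.1 (hC r hr)).1 (abs_le.1 (hC r hr)).2
      have h2 : k * (r * θ' r) ^ 2 ≤ 1 := (mul_le_mul_of_nonneg_left h1 hk0).trans hεC
      rw [sub_nonneg, le_div_iff₀ (by positivity)]
      nlinarith
  have hT' := mul_le_mul_of_nonneg_left hT (mul_nonneg hk0 hb0)
  have e3 : k * (M ^ 2 * b) * ∫ p in wedgeUR a R, (ψ p) ^ 2 * p.1
      = k * b * (M ^ 2 * ∫ p in wedgeUR a R, (ψ p) ^ 2 * p.1) := by ring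
  rw [e3, ge_iff_le]
  linarith
end
end

section
/- Let a ∈ (0,1]. Then for every φ ∈ C¹_c(U) one has ∫_U [ |∂_ρφ(ρ,φ)|² + |∂_φφ(ρ,φ)|²/ρ² + (ρ²/16) |φ(ρ,φ)|² ] ρ dρ dφ ≥ (1/2 + 1/(4a)) ∫_U |φ(ρ,φ)|² ρ dρ dφ. -/
open MeasureTheory Real Set

noncomputable section

theorem aux_int_fderiv_zero (v : ℝ × ℝ → ℝ) (hv : ContDiff ℝ 1 v) (hc : HasCompactSupport v)
    (e : ℝ × ℝ) : Integrable (fun p => fderiv ℝ v p e) ∧ ∫ p, fderiv ℝ v p e = 0 := by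
  have hi : Integrable (fun p => fderiv ℝ v p e) := by
    apply Continuous.integrable_of_hasCompactSupport
    · exact (hv.continuous_fderiv (by norm_num)).clm_apply continuous_const
    · exact hc.fderiv_apply (𝕜 := ℝ) e
  refine ⟨hi, ?_⟩
  have h := integral_mul_fderiv_eq_neg_fderiv_mul_of_integrable (μ := (volume : Measure (ℝ × ℝ)))
    (f := fun _ : ℝ × ℝ => (1:ℝ)) (g := v) (v := e) (𝕜 := ℝ) (by simp) (by simpa using hi)
    (by simpa using hv.continuous.integrable_of_hasCompactSupport hc) (by fun_prop)
    (fun x _ => hv.differentiable (by norm_num) x)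
  simpa using h

theorem aux_tsupport {ψ f : ℝ × ℝ → ℝ} (h : ∀ p, p ∉ tsupport ψ → f p = 0) :
    tsupport f ⊆ tsupport ψ := by
  apply closure_minimal _ (isClosed_tsupport ψ)
  intro p hp
  by_contra hh
  exact hp (h p hh)

/-- Divergence term. -/
theorem aux_smooth {ψ w : ℝ × ℝ → ℝ} {U : Set (ℝ × ℝ)} (hψ : ContDiff ℝ 1 ψ)
    (hc : HasCompactSupport ψ) (hs : tsupport ψ ⊆ U)
    (hw : ∀ p ∈ U, ContDiffAt ℝ 1 w p) :
    ContDiff ℝ 1 (fun p => w p * ψ p ^ 2) ∧ HasCompactSupport (fun p => w p * ψ p ^ 2) := by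
  have ht : tsupport (fun p => w p * ψ p ^ 2) ⊆ tsupport ψ := by
    apply aux_tsupport
    intro p hp
    simp [image_eq_zero_of_notMem_tsupport hp]
  constructor
  · rw [contDiff_iff_contDiffAt]
    intro p
    by_cases hp : p ∈ tsupport ψ
    · exact (hw p (hs hp)).mul (hψ.contDiffAt.pow 2)
    · have h0 := notMem_tsupport_iff_eventuallyEq.mp (fun h => hp (ht h))
      exact (contDiffAt_const (c := (0:ℝ))).congr_of_eventuallyEq h0
  · exact hc.of_isClosed_subset (isClosed_tsupport _) ht

theorem aux_pointwise (x ψ A B F2 ν : ℝ) (hx : 0 < x) :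
    (A ^ 2 + B ^ 2 / x ^ 2 + x ^ 2 / 16 * ψ ^ 2) * x ≥
      (1 / 2 + ν / 2) * (ψ ^ 2 * x) +
      ((-(x / 2)) * ψ ^ 2 + (ν - x ^ 2 / 4) * (2 * ψ * A)
      + ((-(ν ^ 2 + F2 ^ 2)) / x * ψ ^ 2 + F2 / x * (2 * ψ * B))) := by
  have key : (A ^ 2 + B ^ 2 / x ^ 2 + x ^ 2 / 16 * ψ ^ 2) * x -
      ((1 / 2 + ν / 2) * (ψ ^ 2 * x) +
      ((-(x / 2)) * ψ ^ 2 + (ν - x ^ 2 / 4) * (2 * ψ * A)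
      + ((-(ν ^ 2 + F2 ^ 2)) / x * ψ ^ 2 + F2 / x * (2 * ψ * B))))
      = x * (A - ψ * (ν / x - x / 4)) ^ 2 + (B - ψ * F2) ^ 2 / x := by
    field_simp
    ring
  have : 0 ≤ x * (A - ψ * (ν / x - x / 4)) ^ 2 + (B - ψ * F2) ^ 2 / x := by positivity
  linarith

theorem oscillator_form_lower_bound
    (a : ℝ) (ha : a ∈ Ioc (0:ℝ) 1) :
    ∀ ψ : ℝ × ℝ → ℝ,
      ContDiff ℝ 1 ψ → HasCompactSupport ψ → tsupport ψ ⊆ wedgeU a →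
      (∫ p in wedgeU a,
          ((fderiv ℝ ψ p (1, 0)) ^ 2 + (fderiv ℝ ψ p (0, 1)) ^ 2 / p.1 ^ 2
            + p.1 ^ 2 / 16 * (ψ p) ^ 2) * p.1)
        ≥ (1 / 2 + 1 / (4 * a)) * ∫ p in wedgeU a, (ψ p) ^ 2 * p.1 := by
  intro ψ hψ hc hs
  have ha0 : 0 < a := ha.1
  obtain ⟨ν, hν⟩ : ∃ ν : ℝ, ν = 1 / (2 * a) := ⟨_, rfl⟩
  have hν0 : 0 < ν := by rw [hν]; positivity
  have hcoef : 1 / 2 + 1 / (4 * a) = 1 / 2 + ν / 2 := by rw [hν]; field_simp; ring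
  rw [hcoef]
  have hUm : MeasurableSet (wedgeU a) := measurableSet_Ioi.prod measurableSet_Ioo
  have hx : ∀ p ∈ wedgeU a, 0 < p.1 := fun p hp => hp.1
  have hsin : ∀ p ∈ wedgeU a, sin (ν * p.2) ≠ 0 := by
    intro p hp
    have h1 : 0 < p.2 := hp.2.1
    have h2 : p.2 < 2 * π * a := hp.2.2
    apply ne_of_gt
    apply sin_pos_of_pos_of_lt_pi (by positivity)
    calc ν * p.2 < ν * (2 * π * a) := by gcongr
      _ = π := by rw [hν]; field_simp
  set w1 : ℝ × ℝ → ℝ := fun p => ν - p.1 ^ 2 / 4 with hw1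
  set w2 : ℝ × ℝ → ℝ := fun p => ν * (cos (ν * p.2) / sin (ν * p.2)) / p.1 with hw2
  have hw1c : ∀ p ∈ wedgeU a, ContDiffAt ℝ 1 w1 p := by
    intro p hp; rw [hw1]; fun_prop
  have hw2c : ∀ p ∈ wedgeU a, ContDiffAt ℝ 1 w2 p := by
    intro p hp; rw [hw2]
    have h1 := hsin p hp
    have h2 := (hx p hp).ne'
    refine ContDiffAt.div (contDiffAt_const.mul (ContDiffAt.div ?_ ?_ h1)) (by fun_prop) h2
    · fun_prop
    · fun_prop
  obtain ⟨s1, c1⟩ := aux_smooth hψ hc hs hw1c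
  obtain ⟨s2, c2⟩ := aux_smooth hψ hc hs hw2c
  obtain ⟨i1, z1⟩ := aux_int_fderiv_zero _ s1 c1 (1, 0)
  obtain ⟨i2, z2⟩ := aux_int_fderiv_zero _ s2 c2 (0, 1)
  have hout : ∀ (w : ℝ × ℝ → ℝ) (e : ℝ × ℝ), ∀ p, p ∉ wedgeU a →
      fderiv ℝ (fun p => w p * ψ p ^ 2) p e = 0 := by
    intro w e p hp
    have : p ∉ tsupport (fun p => w p * ψ p ^ 2) := by
      intro h
      refine hp (hs (aux_tsupport ?_ h))
      intro q hq
      simp [image_eq_zero_of_notMem_tsupport hq]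
    rw [fderiv_of_notMem_tsupport (𝕜 := ℝ) this]; simp
  rw [← setIntegral_eq_integral_of_forall_compl_eq_zero (s := wedgeU a) (hout w1 _)] at z1
  rw [← setIntegral_eq_integral_of_forall_compl_eq_zero (s := wedgeU a) (hout w2 _)] at z2
  have i0 : Integrable (fun p : ℝ × ℝ => ψ p ^ 2 * p.1) := by
    apply Continuous.integrable_of_hasCompactSupport
    · have := hψ.continuous
      fun_prop
    · refine hc.of_isClosed_subset (isClosed_tsupport _) (aux_tsupport ?_)
      intro p hp
      simp [image_eq_zero_of_notMem_tsupport hp]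
  have iL : Integrable (fun p : ℝ × ℝ =>
      ((fderiv ℝ ψ p (1, 0)) ^ 2 + (fderiv ℝ ψ p (0, 1)) ^ 2 / p.1 ^ 2
            + p.1 ^ 2 / 16 * (ψ p) ^ 2) * p.1) := by
    have ht := aux_tsupport (ψ := ψ) (f := fun p : ℝ × ℝ =>
      ((fderiv ℝ ψ p (1, 0)) ^ 2 + (fderiv ℝ ψ p (0, 1)) ^ 2 / p.1 ^ 2
            + p.1 ^ 2 / 16 * (ψ p) ^ 2) * p.1) (by
        intro p hp
        simp [image_eq_zero_of_notMem_tsupport hp, fderiv_of_notMem_tsupport (𝕜 := ℝ) hp])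
    apply Continuous.integrable_of_hasCompactSupport
    · apply continuous_of_tsupport
      intro p hp
      have h2 := (hx p (hs (ht hp))).ne'
      have hd : ∀ e : ℝ × ℝ, Continuous (fun p => fderiv ℝ ψ p e) := fun e =>
        (hψ.continuous_fderiv (by norm_num)).clm_apply continuous_const
      have hd1 := (hd (1, 0)).continuousAt (x := p)
      have hd2 := (hd (0, 1)).continuousAt (x := p)
      have h0 := hψ.continuous.continuousAt (x := p)
      have h3 : p.1 ^ 2 ≠ 0 := pow_ne_zero 2 h2
      exact (((hd1.pow 2).add ((hd2.pow 2).div (by fun_prop) h3)).add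
        (ContinuousAt.mul (by fun_prop) (h0.pow 2))).mul (by fun_prop)
    · exact hc.of_isClosed_subset (isClosed_tsupport _) ht
  have hmono : (∫ p in wedgeU a, ((1 / 2 + ν / 2) * (ψ p ^ 2 * p.1) +
        (fderiv ℝ (fun p => w1 p * ψ p ^ 2) p (1, 0)
          + fderiv ℝ (fun p => w2 p * ψ p ^ 2) p (0, 1)))) ≤
      ∫ p in wedgeU a, ((fderiv ℝ ψ p (1, 0)) ^ 2 + (fderiv ℝ ψ p (0, 1)) ^ 2 / p.1 ^ 2
            + p.1 ^ 2 / 16 * (ψ p) ^ 2) * p.1 := by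
    refine setIntegral_mono_on ((i0.const_mul _).add (i1.add i2)).integrableOn
      iL.integrableOn hUm ?_
    intro p hp
    have hp1 := hx p hp
    have hps := hsin p hp
    have hψd : HasFDerivAt ψ (fderiv ℝ ψ p) p :=
      (hψ.differentiable (by norm_num) p).hasFDerivAt
    have hsq := hψd.pow 2
    have e1 : fderiv ℝ (fun p => w1 p * ψ p ^ 2) p (1, 0) =
        (-(p.1 / 2)) * ψ p ^ 2 + (ν - p.1 ^ 2 / 4) * (2 * ψ p * fderiv ℝ ψ p (1, 0)) := by
      have hf : HasFDerivAt w1 _ p :=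
        ((((hasFDerivAt_fst (𝕜 := ℝ) (p := p)).pow 2).mul_const (1/4)).const_sub ν).congr_of_eventuallyEq
          (Filter.Eventually.of_forall fun q => by simp [hw1]; ring)
      have hm : HasFDerivAt (fun p => w1 p * ψ p ^ 2) _ p := hf.mul hsq
      rw [hm.fderiv]
      simp [hw1]
      ring
    have e2 : fderiv ℝ (fun p => w2 p * ψ p ^ 2) p (0, 1) =
        (-(ν ^ 2 + (ν * (cos (ν * p.2) / sin (ν * p.2))) ^ 2)) / p.1 * ψ p ^ 2
        + (ν * (cos (ν * p.2) / sin (ν * p.2))) / p.1 * (2 * ψ p * fderiv ℝ ψ p (0, 1)) := by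
      have hwd : fderiv ℝ w2 p (0, 1) =
          (-(ν ^ 2 + (ν * (cos (ν * p.2) / sin (ν * p.2))) ^ 2)) / p.1 := by
        have hdw : DifferentiableAt ℝ w2 p := (hw2c p hp).differentiableAt (by norm_num)
        have hl : HasDerivAt (fun t : ℝ => (p.1, t)) ((0:ℝ), (1:ℝ)) p.2 :=
          (hasDerivAt_const p.2 p.1).prodMk (hasDerivAt_id p.2)
        have hcomp := HasFDerivAt.comp_hasDerivAt (f := fun t : ℝ => (p.1, t)) p.2
          (l := w2) (l' := fderiv ℝ w2 p) hdw.hasFDerivAt hl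
        have hin : HasDerivAt (fun t : ℝ => ν * t) ν p.2 := by
          simpa using (hasDerivAt_id p.2).const_mul ν
        have hdir := (((hin.cos).div hin.sin hps).const_mul ν).div_const p.1
        have := hcomp.unique hdir
        rw [this]
        have hcs := sin_sq_add_cos_sq (ν * p.2)
        field_simp
        ring
      have hdw : DifferentiableAt ℝ w2 p := (hw2c p hp).differentiableAt (by norm_num)
      have hm : HasFDerivAt (fun p => w2 p * ψ p ^ 2) _ p := hdw.hasFDerivAt.mul hsq
      rw [hm.fderiv]
      simp [hwd]
      simp [hw2]
      ring
    rw [e1, e2]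
    exact aux_pointwise _ _ _ _ _ _ hp1
  have i12 : Integrable (fun p => fderiv ℝ (fun p => w1 p * ψ p ^ 2) p (1, 0)
          + fderiv ℝ (fun p => w2 p * ψ p ^ 2) p (0, 1)) := i1.add i2
  rw [integral_add (i0.const_mul _).integrableOn i12.integrableOn,
    integral_add i1.integrableOn i2.integrableOn, z1, z2, integral_const_mul] at hmono
  simpa using hmono
end
end

section
/- Let a ∈ (0,1], set μ := 1/(2a), and define u : (0,∞) × (0,∞) × (0,2πa) → ℝ by u(t,r,φ) := (1+t)^{−(1+μ)} r^μ e^{−r²/(4(1+t))} sin(μφ). Then u satisfies the heat equation in polar coordinates: for all t > 0, r > 0, φ ∈ (0,2πa), ∂_t u(t,r,φ) = ∂_r² u(t,r,φ) + (1/r) ∂_r u(t,r,φ) + (1/r²) ∂_φ² u(t,r,φ); moreover u(t,r,φ) → 0 as φ → 0 and as φ → 2πa. -/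
open MeasureTheory Real Set Filter

noncomputable section

/-- **The explicit self-similar solution of the heat equation in a straight wedge.**
For `a ∈ (0,1]` and `μ = 1/(2a)`, the function
`u(t,r,φ) = (1+t)^{-(1+μ)} r^μ e^{-r²/(4(1+t))} sin(μφ)` satisfies the heat equation
`∂_t u = ∂_r² u + (1/r)∂_r u + (1/r²)∂_φ² u` in polar coordinates on
`(0,∞) × (0,∞) × (0,2πa)`, and vanishes in the limits `φ → 0` and `φ → 2πa`. -/
theorem self_similar_heat_solution
    (a : ℝ) (ha : a ∈ Ioc (0:ℝ) 1)
    (μ : ℝ) (hμ : μ = 1 / (2 * a))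
    (u : ℝ → ℝ → ℝ → ℝ)
    (hu : ∀ t r φ, u t r φ
      = (1 + t) ^ (-(1 + μ)) * r ^ μ * Real.exp (-r ^ 2 / (4 * (1 + t)))
          * Real.sin (μ * φ)) :
    ∀ t ∈ Ioi (0:ℝ), ∀ r ∈ Ioi (0:ℝ), ∀ φ ∈ Ioo (0:ℝ) (2 * π * a),
      (deriv (fun t' => u t' r φ) t
        = deriv (fun r' => deriv (fun r'' => u t r'' φ) r') r
          + (1 / r) * deriv (fun r' => u t r' φ) r
          + (1 / r ^ 2) * deriv (fun q => deriv (fun q' => u t r q') q) φ)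
      ∧ Tendsto (fun q => u t r q) (nhdsWithin 0 (Ioo (0:ℝ) (2 * π * a))) (nhds 0)
      ∧ Tendsto (fun q => u t r q) (nhdsWithin (2 * π * a) (Ioo (0:ℝ) (2 * π * a)))
          (nhds 0) := by
  intro t ht r hr φ hφ
  have ht : 0 < t := ht
  have hr : 0 < r := hr
  have hs : 0 < 1 + t := by linarith
  have ha0 : 0 < a := ha.1
  have hcont : Continuous (fun q => u t r q) := by
    simp only [hu]
    fun_prop
  have hT : HasDerivAt (fun t' => u t' r φ)
      ((-(1 + μ) / (1 + t) + r ^ 2 / (4 * (1 + t) ^ 2)) * u t r φ) t := by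
    simp only [hu]
    have h0 : HasDerivAt (fun x : ℝ => 1 + x) 1 t := (hasDerivAt_id t).const_add 1
    have h1 := h0.rpow_const (p := -(1 + μ)) (Or.inl hs.ne')
    have h2 : HasDerivAt (fun x : ℝ => -r ^ 2 / (4 * (1 + x))) _ t :=
      (hasDerivAt_const t (-r ^ 2)).div (h0.const_mul 4) (by positivity)
    have h3 := ((h1.mul_const (r ^ μ)).mul h2.exp).mul_const (Real.sin (μ * φ))
    refine h3.congr_deriv ?_
    rw [Real.rpow_sub_one hs.ne']
    field_simp
    ring
  have hR : ∀ x : ℝ, 0 < x → HasDerivAt (fun r' => u t r' φ)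
      ((μ / x - x / (2 * (1 + t))) * u t x φ) x := by
    intro x hx
    simp only [hu]
    have h1 : HasDerivAt (fun y : ℝ => y ^ μ) _ x :=
      Real.hasDerivAt_rpow_const (p := μ) (Or.inl hx.ne')
    have h2 : HasDerivAt (fun y : ℝ => -y ^ 2 / (4 * (1 + t))) _ x :=
      ((hasDerivAt_pow 2 x).neg).div_const (4 * (1 + t))
    have h3 := ((h1.const_mul ((1 + t) ^ (-(1 + μ)))).mul h2.exp).mul_const (Real.sin (μ * φ))
    refine h3.congr_deriv ?_
    rw [Real.rpow_sub_one hx.ne']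
    field_simp
    ring
  have hRR : HasDerivAt (fun r' => deriv (fun r'' => u t r'' φ) r')
      ((-μ / r ^ 2 - 1 / (2 * (1 + t))) * u t r φ
        + (μ / r - r / (2 * (1 + t))) * ((μ / r - r / (2 * (1 + t))) * u t r φ)) r := by
    have h1 : HasDerivAt (fun y : ℝ => μ / y - y / (2 * (1 + t)))
        (-μ / r ^ 2 - 1 / (2 * (1 + t))) r := by
      have h := ((hasDerivAt_const r μ).div (hasDerivAt_id r) hr.ne').sub
        ((hasDerivAt_id r).div_const (2 * (1 + t)))
      refine h.congr_deriv ?_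
      simp
    refine (h1.mul (hR r hr)).congr_of_eventuallyEq ?_
    filter_upwards [Ioi_mem_nhds hr] with x hx
    exact (hR x hx).deriv
  have hQ : ∀ q : ℝ, deriv (fun q' => u t r q') q
      = (1 + t) ^ (-(1 + μ)) * r ^ μ * Real.exp (-r ^ 2 / (4 * (1 + t)))
          * (Real.cos (μ * q) * μ) := by
    intro q
    simp only [hu]
    have h0 : HasDerivAt (fun y : ℝ => μ * y) μ q := by
      simpa using (hasDerivAt_id q).const_mul μ
    exact (h0.sin.const_mul _).deriv
  have hQQ : deriv (fun q => deriv (fun q' => u t r q') q) φ = -μ ^ 2 * u t r φ := by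
    simp only [hQ]
    have h0 : HasDerivAt (fun y : ℝ => μ * y) μ φ := by
      simpa using (hasDerivAt_id φ).const_mul μ
    rw [((h0.cos.mul_const μ).const_mul _).deriv, hu]
    ring
  refine ⟨?_, ?_, ?_⟩
  · rw [hT.deriv, hRR.deriv, (hR r hr).deriv, hQQ]
    field_simp
    ring
  · have h := (hcont.tendsto 0).mono_left
      (nhdsWithin_le_nhds (s := Ioo (0:ℝ) (2 * π * a)))
    have h0 : u t r 0 = 0 := by simp [hu]
    rwa [h0] at h
  · have h := (hcont.tendsto (2 * π * a)).mono_left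
      (nhdsWithin_le_nhds (s := Ioo (0:ℝ) (2 * π * a)))
    have h0 : u t r (2 * π * a) = 0 := by
      have : μ * (2 * π * a) = π := by rw [hμ]; field_simp
      rw [hu, this, Real.sin_pi, mul_zero]
    rwa [h0] at h
end
end

section
/- Let a ∈ (0,1] and let θ ∈ C¹((0,∞)) with r ↦ r θ'(r) bounded on (0,∞) and with the support of θ' compact in ℝ. Then for every fixed v ∈ C¹_c(U), lim_{s→∞} ∫_U ρ² e^{s} θ'(e^{s/2} ρ)² |∂_ρ v(ρ,φ)|² ρ dρ dφ = 0. -/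
open MeasureTheory Real Set Filter

noncomputable section

/-- **Vanishing of the twist terms in the self-similar limit.**
If `r θ'(r)` is bounded on `(0,∞)` and `θ'` has compact support, then for every fixed
`v ∈ C¹_c(U)`,
`∫_U ρ² e^s θ'(e^{s/2}ρ)² |∂_ρv|² ρ dρ dφ → 0` as `s → ∞`. -/
theorem twist_term_vanishes
    (a : ℝ) (ha : a ∈ Ioc (0:ℝ) 1)
    (θ θ' : ℝ → ℝ)
    (hderiv : ∀ r ∈ Ioi (0:ℝ), HasDerivAt θ (θ' r) r)
    (hcont : ContinuousOn θ' (Ioi 0))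
    (B : ℝ) (hB : ∀ r ∈ Ioi (0:ℝ), |r * θ' r| ≤ B)
    (hsupp : HasCompactSupport θ')
    (v : ℝ × ℝ → ℝ)
    (hv : ContDiff ℝ 1 v) (hvc : HasCompactSupport v) (hvsupp : tsupport v ⊆ wedgeU a) :
    Tendsto
      (fun s : ℝ => ∫ p in wedgeU a,
        p.1 ^ 2 * Real.exp s * (θ' (Real.exp (s / 2) * p.1)) ^ 2
          * (fderiv ℝ v p (1, 0)) ^ 2 * p.1)
      atTop (nhds 0) := by
  have hδ : ∃ δ > 0, ∀ p ∈ tsupport v, δ ≤ p.1 := by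
    rcases (tsupport v).eq_empty_or_nonempty with h | h
    · exact ⟨1, one_pos, by simp [h]⟩
    · obtain ⟨q, hq, hmin⟩ := IsCompact.exists_isMinOn hvc h continuous_fst.continuousOn
      exact ⟨q.1, (hvsupp hq).1, fun p hp => hmin hp⟩
  obtain ⟨δ, hδ0, hδ⟩ := hδ
  obtain ⟨R, hR⟩ := IsCompact.bddAbove hsupp
  have hlim : Tendsto (fun s : ℝ => Real.exp (s / 2) * δ) atTop atTop :=
    (Real.tendsto_exp_atTop.comp (tendsto_id.atTop_div_const two_pos)).atTop_mul_const hδ0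
  refine tendsto_const_nhds.congr' ?_
  filter_upwards [hlim.eventually_gt_atTop R] with s hs
  symm
  have hz : ∀ p : ℝ × ℝ, p.1 ^ 2 * Real.exp s * (θ' (Real.exp (s / 2) * p.1)) ^ 2
          * (fderiv ℝ v p (1, 0)) ^ 2 * p.1 = 0 := by
    intro p
    by_cases hp : p ∈ tsupport v
    · have h1 : Real.exp (s / 2) * δ ≤ Real.exp (s / 2) * p.1 :=
        mul_le_mul_of_nonneg_left (hδ p hp) (Real.exp_pos _).le
      have h2 : θ' (Real.exp (s / 2) * p.1) = 0 := by
        apply image_eq_zero_of_notMem_tsupport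
        intro h
        have := hR h
        linarith
      simp [h2]
    · have h2 : fderiv ℝ v p = 0 := by
        by_contra h
        exact hp (support_fderiv_subset ℝ h)
      simp [h2]
  simp only [hz, integral_zero]
end
end
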